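/- arXiv:0904.2820 — 4 statements merged into one kernel-verified Lean document; each statement's English description precedes it below -/
import Mathlib

section
/- Fix μ ∈ ℤ. For every ε > 0 there exists a constant C_ε > 0, independent of μ, such that for all dyadic numbers N₁, N₂, N₃ ≥ 1 the set S_μ = {(n₁, n₂, n₃) ∈ ℤ³ : N_j ≤ |n_j| < 2N_j for j = 1,2,3, n₂ ≠ n₁, n₂ ≠ n₃, and 2(n₂ − n₁)(n₂ − n₃) = μ} is finite with cardinality #S_μ ≤ C_ε · (max(N₁,N₂,N₃))^ε · min(N₁,N₂,N₃). -/
open Finset in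
/-- The divisor bound: `d(n) = O_ε(n ^ ε)` for every `ε > 0`. -/
theorem exists_card_divisors_le_mul_rpow {ε : ℝ} (hε : 0 < ε) :
    ∃ C : ℝ, 0 < C ∧ ∀ n : ℕ, n ≠ 0 → (#n.divisors : ℝ) ≤ C * (n : ℝ) ^ ε := by
  set M : ℕ := ⌈(2 : ℝ) ^ (1 / ε)⌉₊
  set K : ℝ := max 1 (1 / (ε * Real.log 2))
  have hK1 : 1 ≤ K := le_max_left _ _
  have hlog : 0 < ε * Real.log 2 := mul_pos hε (Real.log_pos one_lt_two)
  refine ⟨K ^ M, by positivity, fun n hn ↦ ?_⟩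
  have local_bound : ∀ p ∈ n.primeFactors, ((n.factorization p + 1 : ℕ) : ℝ) ≤
      (if p < M then K else 1) * ((p : ℝ) ^ n.factorization p) ^ ε := by
    intro p hp
    set a := n.factorization p
    have hp2 : (2 : ℝ) ≤ p := by exact_mod_cast (Nat.prime_of_mem_primeFactors hp).two_le
    rw [← Real.rpow_pow_comm (by positivity)]
    split_ifs with hpM
    · have bernoulli : 1 + a * (ε * Real.log 2) ≤ ((p : ℝ) ^ ε) ^ a := calc
        1 + a * (ε * Real.log 2) ≤ Real.exp (a * (ε * Real.log 2)) := by
          linarith [Real.add_one_le_exp (a * (ε * Real.log 2))]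
        _ = ((2 : ℝ) ^ ε) ^ a := by
          rw [Real.exp_nat_mul, Real.rpow_def_of_pos two_pos, mul_comm ε]
        _ ≤ _ := by gcongr
      have hKlog : 1 ≤ K * (ε * Real.log 2) := by
        rw [← div_le_iff₀ hlog]
        exact le_max_right _ _
      push_cast
      calc (a : ℝ) + 1 ≤ K * (1 + a * (ε * Real.log 2)) := by
            nlinarith [mul_le_mul_of_nonneg_left hKlog (Nat.cast_nonneg (α := ℝ) a)]
        _ ≤ _ := by gcongr
    · have hpε : (2 : ℝ) ≤ (p : ℝ) ^ ε := by
        have hle : (2 : ℝ) ^ (1 / ε) ≤ p := Nat.ceil_le.mp (not_lt.mp hpM)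
        calc (2 : ℝ) = ((2 : ℝ) ^ (1 / ε)) ^ ε := by
              rw [← Real.rpow_mul two_pos.le, one_div_mul_cancel hε.ne', Real.rpow_one]
          _ ≤ _ := by gcongr
      calc ((a + 1 : ℕ) : ℝ) ≤ (2 : ℝ) ^ a := by exact_mod_cast Nat.lt_two_pow_self
        _ ≤ 1 * ((p : ℝ) ^ ε) ^ a := by rw [one_mul]; gcongr
  have hprod : ∏ p ∈ n.primeFactors, (if p < M then K else 1) ≤ K ^ M := by
    rw [← prod_filter, prod_const]
    refine pow_le_pow_right₀ hK1 ?_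
    calc #{p ∈ n.primeFactors | p < M} ≤ #(range M) :=
          card_le_card fun p hp ↦ mem_range.mpr (mem_filter.mp hp).2
      _ = M := card_range M
  have hfactor : ∏ p ∈ n.primeFactors, (p : ℝ) ^ n.factorization p = n := by
    exact_mod_cast Nat.prod_factorization_pow_eq_self hn
  rw [Nat.card_divisors hn, Nat.cast_prod]
  calc _ ≤ ∏ p ∈ n.primeFactors,
          (if p < M then K else 1) * ((p : ℝ) ^ n.factorization p) ^ ε :=
        prod_le_prod (fun _ _ ↦ by positivity) local_bound
    _ = (∏ p ∈ n.primeFactors, if p < M then K else 1) * (n : ℝ) ^ ε := by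
        rw [prod_mul_distrib, Real.finsetProd_rpow _ _ (fun _ _ ↦ by positivity), hfactor]
    _ ≤ _ := by gcongr

open Finset in
/-- A set parametrized injectively by an integer of size at most `2 * N` and a divisor of `μ ≠ 0`
has at most `10 * N * d(|μ|)` elements. -/
theorem finite_and_ncard_le_of_injOn_of_dvd {α : Type*} {S : Set α} (a d : α → ℤ) {μ : ℤ} {N : ℕ}
    (hμ : μ ≠ 0) (hN : 1 ≤ N) (hinj : Set.InjOn (fun p ↦ (a p, d p)) S)
    (ha : ∀ p ∈ S, |a p| ≤ 2 * N) (hd : ∀ p ∈ S, d p ∣ μ) :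
    S.Finite ∧ S.ncard ≤ 10 * N * #μ.natAbs.divisors := by
  set D : Finset ℤ := μ.natAbs.divisors.image (fun n : ℕ ↦ (n : ℤ)) ∪
    μ.natAbs.divisors.image (fun n : ℕ ↦ -(n : ℤ))
  have hmaps : Set.MapsTo (fun p ↦ (a p, d p)) S (Icc (-(2 * N : ℤ)) (2 * N) ×ˢ D : Finset _) := by
    intro p hp
    have hmem : (d p).natAbs ∈ μ.natAbs.divisors :=
      Nat.mem_divisors.mpr ⟨Int.natAbs_dvd_natAbs.mpr (hd p hp), Int.natAbs_ne_zero.mpr hμ⟩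
    rw [mem_coe, mem_product, mem_Icc, mem_union, mem_image, mem_image]
    refine ⟨abs_le.mp (ha p hp), ?_⟩
    rcases Int.natAbs_eq (d p) with h | h
    · exact .inl ⟨_, hmem, h.symm⟩
    · exact .inr ⟨_, hmem, h.symm⟩
  have hD : #D ≤ 2 * #μ.natAbs.divisors := by
    rw [two_mul]
    exact (card_union_le _ _).trans (add_le_add card_image_le card_image_le)
  refine ⟨.of_injOn hmaps hinj (finite_toSet _), ?_⟩
  calc S.ncard ≤ #(Icc (-(2 * N : ℤ)) (2 * N) ×ˢ D) := by
        rw [← Set.ncard_coe_finset]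
        exact Set.ncard_le_ncard_of_injOn _ hmaps hinj (finite_toSet _)
    _ = (4 * N + 1) * #D := by
        rw [card_product, Int.card_Icc]
        congr 1
        omega
    _ ≤ (5 * N) * (2 * #μ.natAbs.divisors) := by
        gcongr
        omega
    _ = _ := by ring

/-- Counting lemma: for fixed `μ`, the number of integer triples `(n₁, n₂, n₃)` with
`|n_j| ∈ [N_j, 2N_j)` for dyadic `N_j = 2^{k_j}`, `n₂ ≠ n₁, n₃` and
`2(n₂ - n₁)(n₂ - n₃) = μ` is `O_ε((N^1)^ε N^3)`, where `N^1` (resp. `N^3`) is the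
largest (resp. smallest) of the `N_j`, with a constant independent of `μ`. -/
theorem stmt_0 :
    ∀ ε : ℝ, 0 < ε → ∃ C : ℝ, 0 < C ∧
      ∀ (μ : ℤ) (k₁ k₂ k₃ : ℕ),
        letI N₁ : ℝ := 2 ^ k₁
        letI N₂ : ℝ := 2 ^ k₂
        letI N₃ : ℝ := 2 ^ k₃
        letI S : Set (ℤ × ℤ × ℤ) :=
          {p | (N₁ ≤ (|p.1| : ℤ) ∧ ((|p.1| : ℤ) : ℝ) < 2 * N₁) ∧
               (N₂ ≤ (|p.2.1| : ℤ) ∧ ((|p.2.1| : ℤ) : ℝ) < 2 * N₂) ∧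
               (N₃ ≤ (|p.2.2| : ℤ) ∧ ((|p.2.2| : ℤ) : ℝ) < 2 * N₃) ∧
               p.2.1 ≠ p.1 ∧ p.2.1 ≠ p.2.2 ∧
               2 * (p.2.1 - p.1) * (p.2.1 - p.2.2) = μ}
        S.Finite ∧ (S.ncard : ℝ) ≤ C * (max N₁ (max N₂ N₃)) ^ ε * min N₁ (min N₂ N₃) := by
  intro ε hε
  obtain ⟨C, hC, hdiv⟩ := exists_card_divisors_le_mul_rpow (half_pos hε)
  refine ⟨10 * C * 32 ^ (ε / 2), by positivity, fun μ k₁ k₂ k₃ ↦ ?_⟩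
  set N₁ : ℝ := 2 ^ k₁
  set N₂ : ℝ := 2 ^ k₂
  set N₃ : ℝ := 2 ^ k₃
  set S : Set (ℤ × ℤ × ℤ) :=
    {p | (N₁ ≤ (|p.1| : ℤ) ∧ ((|p.1| : ℤ) : ℝ) < 2 * N₁) ∧
         (N₂ ≤ (|p.2.1| : ℤ) ∧ ((|p.2.1| : ℤ) : ℝ) < 2 * N₂) ∧
         (N₃ ≤ (|p.2.2| : ℤ) ∧ ((|p.2.2| : ℤ) : ℝ) < 2 * N₃) ∧
         p.2.1 ≠ p.1 ∧ p.2.1 ≠ p.2.2 ∧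
         2 * (p.2.1 - p.1) * (p.2.1 - p.2.2) = μ}
  rcases S.eq_empty_or_nonempty with hS | ⟨q, hq⟩
  · rw [hS]
    refine ⟨Set.finite_empty, ?_⟩
    rw [Set.ncard_empty, Nat.cast_zero]
    positivity
  set N := max N₁ (max N₂ N₃)
  have hN₁ : N₁ ≤ N := le_max_left _ _
  have hN₂ : N₂ ≤ N := (le_max_left _ _).trans (le_max_right _ _)
  have hN₃ : N₃ ≤ N := (le_max_right _ _).trans (le_max_right _ _)
  have hN0 : 0 < N := (pow_pos two_pos k₁).trans_le hN₁
  have hμ : μ ≠ 0 := by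
    rw [← hq.2.2.2.2.2]
    exact mul_ne_zero (mul_ne_zero two_ne_zero (sub_ne_zero.mpr hq.2.2.2.1))
      (sub_ne_zero.mpr hq.2.2.2.2.1)
  have hμN : (μ.natAbs : ℝ) ≤ 32 * N ^ 2 := by
    obtain ⟨⟨-, h₁⟩, ⟨-, h₂⟩, ⟨-, h₃⟩, -, -, rfl⟩ := hq
    rw [Nat.cast_natAbs]
    push_cast at h₁ h₂ h₃ ⊢
    rw [abs_mul, abs_mul, abs_two]
    have h₂₁ := abs_sub (q.2.1 : ℝ) q.1
    have h₂₃ := abs_sub (q.2.1 : ℝ) q.2.2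
    calc 2 * |(q.2.1 : ℝ) - q.1| * |(q.2.1 : ℝ) - q.2.2| ≤ 2 * (4 * N) * (4 * N) := by
          gcongr <;> linarith
      _ = _ := by ring
  have hdivμ : (μ.natAbs.divisors.card : ℝ) ≤ C * (32 ^ (ε / 2) * N ^ ε) := by
    refine (hdiv _ (Int.natAbs_ne_zero.mpr hμ)).trans ?_
    gcongr
    calc (μ.natAbs : ℝ) ^ (ε / 2) ≤ (32 * N ^ 2) ^ (ε / 2) := by gcongr
      _ = 32 ^ (ε / 2) * N ^ ε := by
        rw [Real.mul_rpow (by positivity) (by positivity), ← Real.rpow_natCast N 2,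
          ← Real.rpow_mul hN0.le]
        congr 2
        push_cast
        ring
  have habs {x : ℤ} {k : ℕ} (h : ((|x| : ℤ) : ℝ) < 2 * 2 ^ k) : |x| ≤ 2 * (2 ^ k : ℕ) := by
    exact_mod_cast h.le
  have hpair {x₁ y₁ x₂ y₂ : ℤ} (hx : x₁ ≠ 0) (h : x₁ = x₂) (h₁ : 2 * x₁ * y₁ = μ)
      (h₂ : 2 * x₂ * y₂ = μ) : y₁ = y₂ := by
    subst h
    exact mul_left_cancel₀ (mul_ne_zero two_ne_zero hx) (h₁.trans h₂.symm)
  have hcount₁ := finite_and_ncard_le_of_injOn_of_dvd (S := S) (N := 2 ^ k₁)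
    (fun p ↦ p.1) (fun p ↦ p.2.1 - p.1) hμ Nat.one_le_two_pow
    (by
      rintro ⟨a, b, c⟩ ⟨-, -, -, hne, -, hp⟩ ⟨x, y, z⟩ ⟨-, -, -, -, -, hq⟩ h
      simp only [Prod.mk.injEq] at h hne hp hq ⊢
      have := hpair (sub_ne_zero.mpr hne) h.2 hp hq
      omega)
    (fun p hp ↦ habs hp.1.2)
    (fun p hp ↦ ⟨2 * (p.2.1 - p.2.2), by rw [← hp.2.2.2.2.2]; ring⟩)
  have hcount₂ := finite_and_ncard_le_of_injOn_of_dvd (S := S) (N := 2 ^ k₂)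
    (fun p ↦ p.2.1) (fun p ↦ p.2.1 - p.1) hμ Nat.one_le_two_pow
    (by
      rintro ⟨a, b, c⟩ ⟨-, -, -, hne, -, hp⟩ ⟨x, y, z⟩ ⟨-, -, -, -, -, hq⟩ h
      simp only [Prod.mk.injEq] at h hne hp hq ⊢
      have := hpair (sub_ne_zero.mpr hne) h.2 hp hq
      omega)
    (fun p hp ↦ habs hp.2.1.2)
    (fun p hp ↦ ⟨2 * (p.2.1 - p.2.2), by rw [← hp.2.2.2.2.2]; ring⟩)
  have hcount₃ := finite_and_ncard_le_of_injOn_of_dvd (S := S) (N := 2 ^ k₃)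
    (fun p ↦ p.2.2) (fun p ↦ p.2.1 - p.2.2) hμ Nat.one_le_two_pow
    (by
      rintro ⟨a, b, c⟩ ⟨-, -, -, -, hne, hp⟩ ⟨x, y, z⟩ ⟨-, -, -, -, -, hq⟩ h
      simp only [Prod.mk.injEq] at h hne hp hq ⊢
      have := hpair (sub_ne_zero.mpr hne) h.2 ((mul_right_comm _ _ _).trans hp)
        ((mul_right_comm _ _ _).trans hq)
      omega)
    (fun p hp ↦ habs hp.2.2.1.2)
    (fun p hp ↦ ⟨2 * (p.2.1 - p.1), by rw [← hp.2.2.2.2.2]; ring⟩)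
  have hreal {k : ℕ} (h : S.ncard ≤ 10 * 2 ^ k * μ.natAbs.divisors.card) :
      (S.ncard : ℝ) ≤ 10 * C * 32 ^ (ε / 2) * N ^ ε * 2 ^ k := by
    calc (S.ncard : ℝ) ≤ 10 * 2 ^ k * μ.natAbs.divisors.card := by exact_mod_cast h
      _ ≤ 10 * 2 ^ k * (C * (32 ^ (ε / 2) * N ^ ε)) := by gcongr
      _ = _ := by ring
  refine ⟨hcount₁.1, ?_⟩
  rw [mul_min_of_nonneg _ _ (by positivity), mul_min_of_nonneg _ _ (by positivity)]
  exact le_min (hreal hcount₁.2) (le_min (hreal hcount₂.2) (hreal hcount₃.2))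
end

section
/- For every b with 0 ≤ b < 1/2 there exists a constant C > 0 such that for every interval [a₁, a₂] ⊂ ℝ and every Schwartz function f : ℝ → ℂ, ∫_ℝ (1 + |τ|)^{2b} | 𝓕(χ_{[a₁,a₂]} · f)(τ) |² dτ ≤ C ∫_ℝ (1 + |τ|)^{2b} | 𝓕 f (τ) |² dτ, where the constant C depends only on b (in particular it is uniform in a₁ and a₂). -/
open MeasureTheory
open scoped FourierTransform ENNReal ContDiff SchwartzMap

theorem continuous_fourier_of_integrable {g : ℝ → ℂ} (hg : Integrable g) : Continuous (𝓕 g) :=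
  VectorFourier.fourierIntegral_continuous Real.continuous_fourierChar
    (by exact continuous_inner) hg

/-- On `L¹ ∩ L²` the `L²` Fourier transform is given by the Fourier integral. -/
theorem fourier_toLp_ae_eq {g : ℝ → ℂ} (hg1 : Integrable g) (hg2 : MemLp g 2) :
    (𝓕 (hg2.toLp g) : Lp ℂ 2 (volume : Measure ℝ)) =ᵐ[volume] 𝓕 g := by
  refine ae_eq_of_integral_contDiff_smul_eq ((Lp.memLp _).locallyIntegrable (by norm_num))
    (continuous_fourier_of_integrable hg1).locallyIntegrable fun φ hφ hφc => ?_
  have hψc : HasCompactSupport (fun x => (φ x : ℂ)) := hφc.comp_left (g := Complex.ofReal) rfl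
  have hψ : ContDiff ℝ ∞ (fun x => (φ x : ℂ)) := Complex.ofRealCLM.contDiff.comp hφ
  set ψ : 𝓢(ℝ, ℂ) := hψc.toSchwartzMap hψ
  have hval : ∀ x, ψ x = (φ x : ℂ) := fun x => rfl
  have h1 := DFunLike.congr_fun (Lp.fourier_toTemperedDistribution_eq (hg2.toLp g)) ψ
  rw [TemperedDistribution.fourier_apply, Lp.toTemperedDistribution_apply,
    Lp.toTemperedDistribution_apply] at h1
  have h2 := VectorFourier.integral_fourierIntegral_smul_eq_flip (μ := volume) (ν := volume)
    (L := innerₗ ℝ) Real.continuous_fourierChar (by exact continuous_inner) ψ.integrable hg1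
  have h3 : ∫ x, (𝓕 ψ) x • (hg2.toLp g) x = ∫ x, (𝓕 ψ) x • g x :=
    integral_congr_ae (by filter_upwards [hg2.coeFn_toLp] with x hx; rw [hx])
  rw [flip_innerₗ] at h2
  calc _ = ∫ x, ψ x • (𝓕 (hg2.toLp g) : Lp ℂ 2 (volume : Measure ℝ)) x := by
        simp [hval]
    _ = ∫ x, (𝓕 ψ) x • g x := by rw [← h1, h3]
    _ = ∫ x, ψ x • 𝓕 g x := h2
    _ = _ := by simp [hval]

/-- Plancherel's theorem on `L¹ ∩ L²`. -/
theorem lintegral_enorm_sq_fourier {g : ℝ → ℂ} (hg1 : Integrable g) (hg2 : MemLp g 2) :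
    ∫⁻ ξ, ‖𝓕 g ξ‖ₑ ^ 2 = ∫⁻ x, ‖g x‖ₑ ^ 2 := by
  have h := congrArg ENNReal.ofReal (Lp.norm_fourier_eq (hg2.toLp g))
  rw [ofReal_norm, ofReal_norm, Lp.enorm_def, Lp.enorm_def,
    eLpNorm_congr_ae (fourier_toLp_ae_eq hg1 hg2), eLpNorm_congr_ae hg2.coeFn_toLp] at h
  have key : ∀ u : ℝ → ℂ, ∫⁻ x, ‖u x‖ₑ ^ 2 = eLpNorm u 2 volume ^ 2 := fun u => by
    simpa using (eLpNorm_nnreal_pow_eq_lintegral (f := u) (μ := volume) (p := 2) (by simp)).symm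
  rw [key, key, h]

/-- The Fourier transform with kernel `e^{-itτ}`. -/
noncomputable def angularFourier (g : ℝ → ℂ) (τ : ℝ) : ℂ :=
  ∫ t : ℝ, Complex.exp (-Complex.I * t * τ) * g t

theorem angularFourier_eq (g : ℝ → ℂ) (τ : ℝ) :
    angularFourier g τ = 𝓕 g ((2 * Real.pi)⁻¹ * τ) := by
  rw [Real.fourier_real_eq_integral_exp_smul, angularFourier]
  congr 1 with t
  rw [smul_eq_mul]
  congr 2
  push_cast
  have := Real.pi_ne_zero
  field_simp

theorem continuous_angularFourier {g : ℝ → ℂ} (hg : Integrable g) :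
    Continuous (angularFourier g) := by
  rw [funext (angularFourier_eq g)]
  exact (continuous_fourier_of_integrable hg).comp (by fun_prop)

theorem lintegral_comp_mul_left {c : ℝ} (hc : c ≠ 0) (u : ℝ → ℝ≥0∞) :
    ∫⁻ x, u (c * x) = ENNReal.ofReal |c⁻¹| * ∫⁻ x, u x := by
  rw [← smul_eq_mul, ← lintegral_smul_measure, ← Real.map_volume_mul_left hc]
  exact (lintegral_map_equiv u (Homeomorph.mulLeft₀ c hc).toMeasurableEquiv).symm

theorem lintegral_enorm_sq_angularFourier {g : ℝ → ℂ} (hg1 : Integrable g) (hg2 : MemLp g 2) :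
    ∫⁻ τ, ‖angularFourier g τ‖ₑ ^ 2 = ENNReal.ofReal (2 * Real.pi) * ∫⁻ x, ‖g x‖ₑ ^ 2 := by
  simp_rw [angularFourier_eq]
  rw [lintegral_comp_mul_left (u := fun ξ => ‖𝓕 g ξ‖ₑ ^ 2) (by positivity),
    lintegral_enorm_sq_fourier hg1 hg2, inv_inv, abs_of_pos (by positivity)]

theorem angularFourier_translate_sub {g : ℝ → ℂ} (hg : Integrable g) (h τ : ℝ) :
    angularFourier (fun x => g (x + h) - g x) τ =
      (Complex.exp (Complex.I * (h * τ : ℝ)) - 1) * angularFourier g τ := by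
  have hint : ∀ {u : ℝ → ℂ}, Integrable u →
      Integrable fun t : ℝ => Complex.exp (-Complex.I * t * τ) * u t := fun {u} hu => by
    refine hu.bdd_mul (c := 1) (by fun_prop) (.of_forall fun t => ?_)
    rw [Complex.norm_exp]; simp
  have hshift := integral_add_right_eq_self (μ := volume)
    (fun t : ℝ => Complex.exp (-Complex.I * (t - h : ℝ) * τ) * g t) h
  simp only [add_sub_cancel_right] at hshift
  simp only [angularFourier, mul_sub]
  rw [integral_sub (hint (hg.comp_add_right h)) (hint hg), hshift, sub_mul, one_mul,
    ← integral_const_mul]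
  congr 2 with t
  rw [← mul_assoc, ← Complex.exp_add]
  congr 2
  push_cast
  ring

theorem lintegral_Ioi_rpow_mul_comp_mul_left {c : ℝ} (hc : 0 < c) (s : ℝ) (u : ℝ → ℝ≥0∞) :
    ∫⁻ h in Set.Ioi (0 : ℝ), ENNReal.ofReal (h ^ (-1 - s)) * u (c * h) =
      ENNReal.ofReal (c ^ s) * ∫⁻ h in Set.Ioi (0 : ℝ), ENNReal.ofReal (h ^ (-1 - s)) * u h := by
  set v : ℝ → ℝ≥0∞ := (Set.Ioi (0 : ℝ)).indicator fun h => ENNReal.ofReal (h ^ (-1 - s)) * u h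
  have hv : (Set.Ioi (0 : ℝ)).indicator (fun h => ENNReal.ofReal (h ^ (-1 - s)) * u (c * h)) =
      fun h => ENNReal.ofReal (c ^ (1 + s)) * v (c * h) := by
    funext h
    by_cases hh : 0 < h
    · have hch : 0 < c * h := mul_pos hc hh
      simp only [v, Set.indicator_of_mem (Set.mem_Ioi.2 hh),
        Set.indicator_of_mem (Set.mem_Ioi.2 hch)]
      rw [← mul_assoc, ← ENNReal.ofReal_mul (by positivity), Real.mul_rpow hc.le hh.le, ← mul_assoc,
        ← Real.rpow_add hc]
      simp
    · have hch : ¬ 0 < c * h := fun H => hh (pos_of_mul_pos_right H hc.le)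
      simp only [v, Set.indicator_of_notMem (mt Set.mem_Ioi.1 hh),
        Set.indicator_of_notMem (mt Set.mem_Ioi.1 hch), mul_zero]
  rw [← lintegral_indicator measurableSet_Ioi, ← lintegral_indicator measurableSet_Ioi, hv,
    lintegral_const_mul' _ _ ENNReal.ofReal_ne_top, lintegral_comp_mul_left hc.ne', ← mul_assoc,
    ← ENNReal.ofReal_mul (by positivity), abs_of_pos (by positivity)]
  congr 2
  rw [Real.rpow_add hc, Real.rpow_one]
  field_simp

theorem lintegral_Ioi_rpow_ne_top {s : ℝ} (hs : 0 < s) :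
    ∫⁻ h in Set.Ioi (1 : ℝ), ENNReal.ofReal (h ^ (-1 - s)) ≠ ⊤ :=
  ((integrableOn_Ioi_rpow_of_lt (by linarith) one_pos).lintegral_lt_top).ne

theorem lintegral_Ioc_rpow_ne_top {r : ℝ} (hr : -1 < r) :
    ∫⁻ h in Set.Ioc (0 : ℝ) 1, ENNReal.ofReal (h ^ r) ≠ ⊤ := by
  have := (intervalIntegrable_iff_integrableOn_Ioc_of_le zero_le_one).1
    (intervalIntegral.intervalIntegrable_rpow' (a := 0) (b := 1) hr)
  exact this.lintegral_lt_top.ne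

/-- A singular-weight integral over `(0, ∞)` converges when the integrand is `O(h ^ p)`
near `0` and bounded at infinity. -/
theorem lintegral_Ioi_rpow_mul_ne_top {s p : ℝ} (hs : 0 < s) (hp : s < p)
    {u : ℝ → ℝ≥0∞} {M L : ℝ≥0∞} (hM : M ≠ ⊤) (hL : L ≠ ⊤)
    (huM : ∀ h, 0 < h → h ≤ 1 → u h ≤ M * ENNReal.ofReal (h ^ p))
    (huL : ∀ h, u h ≤ L) :
    ∫⁻ h in Set.Ioi (0 : ℝ), ENNReal.ofReal (h ^ (-1 - s)) * u h ≠ ⊤ := by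
  rw [← Set.Ioc_union_Ioi_eq_Ioi zero_le_one]
  refine ne_top_of_le_ne_top (ENNReal.add_ne_top.2 ⟨?_, ?_⟩) (lintegral_union_le _ _ _)
  · refine ne_top_of_le_ne_top
      (ENNReal.mul_ne_top hM (lintegral_Ioc_rpow_ne_top (r := p - 1 - s) (by linarith))) ?_
    rw [← lintegral_const_mul' _ _ hM]
    refine setLIntegral_mono' measurableSet_Ioc fun h hh => ?_
    calc _ ≤ ENNReal.ofReal (h ^ (-1 - s)) * (M * ENNReal.ofReal (h ^ p)) := by
          gcongr; exact huM h hh.1 hh.2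
      _ = M * (ENNReal.ofReal (h ^ (-1 - s)) * ENNReal.ofReal (h ^ p)) := by ring
      _ = _ := by
        rw [← ENNReal.ofReal_mul (Real.rpow_nonneg hh.1.le _), ← Real.rpow_add hh.1]
        congr 3; ring
  · refine ne_top_of_le_ne_top (ENNReal.mul_ne_top hL (lintegral_Ioi_rpow_ne_top hs)) ?_
    rw [← lintegral_const_mul' _ _ hL]
    refine lintegral_mono fun h => ?_
    rw [mul_comm]
    gcongr
    exact huL h

/-- The constant relating the Gagliardo seminorm of order `s / 2` to its Fourier description. -/
noncomputable def gagliardoConst (s : ℝ) : ℝ≥0∞ :=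
  ∫⁻ h in Set.Ioi (0 : ℝ), ENNReal.ofReal (h ^ (-1 - s)) * ‖Complex.exp (Complex.I * h) - 1‖ₑ ^ 2

theorem gagliardoConst_ne_top {s : ℝ} (hs0 : 0 < s) (hs1 : s < 1) : gagliardoConst s ≠ ⊤ := by
  refine lintegral_Ioi_rpow_mul_ne_top (p := 2) hs0 (by linarith) (M := 1) (L := 4) (by simp)
    (by simp) (fun h h0 _ => ?_) fun h => ?_
  · rw [one_mul, ← ofReal_norm, ← ENNReal.ofReal_pow (norm_nonneg _)]
    refine ENNReal.ofReal_le_ofReal ?_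
    rw [Real.rpow_two]
    gcongr
    simpa [abs_of_pos h0] using Real.norm_exp_I_mul_ofReal_sub_one_le (x := h)
  · rw [← ofReal_norm, ← ENNReal.ofReal_pow (norm_nonneg _)]
    refine ENNReal.ofReal_le_of_le_toReal ?_
    have : ‖Complex.exp (Complex.I * h) - 1‖ ≤ 1 + 1 := by
      refine (norm_sub_le _ _).trans ?_
      rw [mul_comm, Complex.norm_exp_ofReal_mul_I, norm_one]
    have h0 := norm_nonneg (Complex.exp (Complex.I * h) - 1)
    norm_num
    nlinarith

theorem gagliardoConst_ne_zero (s : ℝ) : gagliardoConst s ≠ 0 := by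
  intro h
  rw [gagliardoConst, lintegral_eq_zero_iff (by fun_prop)] at h
  have hpos : volume.restrict (Set.Ioi (0 : ℝ)) (Set.Ioo 0 1) ≠ 0 := by
    rw [Measure.restrict_apply measurableSet_Ioo, Set.inter_eq_left.2 Set.Ioo_subset_Ioi_self]
    simp
  refine hpos (measure_mono_null (fun x hx => ?_) h)
  have hsin : 0 < Real.sin x := Real.sin_pos_of_pos_of_lt_pi hx.1
    (hx.2.trans (by linarith [Real.pi_gt_three]))
  have hne : Complex.exp (Complex.I * x) - 1 ≠ 0 := fun H => by
    have := congrArg Complex.im H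
    rw [mul_comm, Complex.sub_im, Complex.exp_ofReal_mul_I_im] at this
    simp [hsin.ne'] at this
  have : 0 < x ^ (-1 - s) := Real.rpow_pos_of_pos hx.1 _
  simp [hne, this]

theorem lintegral_Ioi_rpow_mul_enorm_exp_sub_one {s : ℝ} (hs : 0 < s) (τ : ℝ) :
    ∫⁻ h in Set.Ioi (0 : ℝ), ENNReal.ofReal (h ^ (-1 - s)) *
        ‖Complex.exp (Complex.I * (h * τ : ℝ)) - 1‖ₑ ^ 2 =
      ENNReal.ofReal (|τ| ^ s) * gagliardoConst s := by
  rcases eq_or_ne τ 0 with rfl | hτ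
  · simp [Real.zero_rpow hs.ne']
  rw [gagliardoConst, ← lintegral_Ioi_rpow_mul_comp_mul_left (abs_pos.2 hτ) s
    (fun h => ‖Complex.exp (Complex.I * h) - 1‖ₑ ^ 2)]
  have hconj : ∀ y : ℝ, ‖Complex.exp (Complex.I * (-y : ℝ)) - 1‖ₑ =
      ‖Complex.exp (Complex.I * y) - 1‖ₑ := fun y => by
    rw [← ofReal_norm, ← ofReal_norm, ← Complex.norm_conj (Complex.exp (Complex.I * y) - 1)]
    simp [← Complex.exp_conj]
  refine lintegral_congr fun h => ?_
  rcases abs_choice τ with H | H <;> rw [H]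
  · rw [mul_comm h]
  · rw [← hconj, mul_comm h, neg_mul]

theorem gagliardo_eq_lintegral_angularFourier {s : ℝ} (hs : 0 < s) {g : ℝ → ℂ}
    (hg1 : Integrable g) (hg2 : MemLp g 2) :
    ENNReal.ofReal (2 * Real.pi) * ∫⁻ h in Set.Ioi (0 : ℝ), ENNReal.ofReal (h ^ (-1 - s)) *
        ∫⁻ x, ‖g (x + h) - g x‖ₑ ^ 2 =
      gagliardoConst s * ∫⁻ τ, ENNReal.ofReal (|τ| ^ s) * ‖angularFourier g τ‖ₑ ^ 2 := by
  have hshift : ∀ h : ℝ, MemLp (fun x => g (x + h)) 2 := fun h =>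
    hg2.comp_measurePreserving (measurePreserving_add_right volume h)
  have hmeas : Measurable (angularFourier g) := (continuous_angularFourier hg1).measurable
  calc _ = ∫⁻ h in Set.Ioi (0 : ℝ), ∫⁻ τ, ENNReal.ofReal (h ^ (-1 - s)) *
        (‖Complex.exp (Complex.I * (h * τ : ℝ)) - 1‖ₑ ^ 2 * ‖angularFourier g τ‖ₑ ^ 2) := by
        rw [← lintegral_const_mul' _ _ ENNReal.ofReal_ne_top]
        refine lintegral_congr fun h => ?_
        rw [mul_left_comm, ← lintegral_enorm_sq_angularFourier (g := fun x => g (x + h) - g x)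
          ((hg1.comp_add_right h).sub hg1) ((hshift h).sub hg2),
          ← lintegral_const_mul' _ _ ENNReal.ofReal_ne_top]
        refine lintegral_congr fun τ => ?_
        rw [← mul_pow, ← enorm_mul, ← angularFourier_translate_sub hg1]
    _ = ∫⁻ τ, ∫⁻ h in Set.Ioi (0 : ℝ), ENNReal.ofReal (h ^ (-1 - s)) *
        (‖Complex.exp (Complex.I * (h * τ : ℝ)) - 1‖ₑ ^ 2 * ‖angularFourier g τ‖ₑ ^ 2) :=
        lintegral_lintegral_swap (by unfold Function.uncurry; fun_prop)
    _ = _ := by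
        rw [← lintegral_const_mul _ (by fun_prop)]
        refine lintegral_congr fun τ => ?_
        simp_rw [← mul_assoc]
        rw [lintegral_mul_const' _ _ (by simp), lintegral_Ioi_rpow_mul_enorm_exp_sub_one hs,
          mul_comm (gagliardoConst s)]

theorem enorm_sq_le_add_enorm_sub_sq {ε : ℝ} (hε : 0 < ε) (z w : ℂ) :
    ‖z‖ₑ ^ 2 ≤ ENNReal.ofReal (1 + ε) * ‖w‖ₑ ^ 2 + ENNReal.ofReal (1 + ε⁻¹) * ‖w - z‖ₑ ^ 2 := by
  simp only [← ofReal_norm, ← ENNReal.ofReal_pow (norm_nonneg _)]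
  rw [← ENNReal.ofReal_mul (by positivity), ← ENNReal.ofReal_mul (by positivity),
    ← ENNReal.ofReal_add (by positivity) (by positivity)]
  refine ENNReal.ofReal_le_ofReal ?_
  have h1 : ‖z‖ ≤ ‖w‖ + ‖w - z‖ := by
    simpa using norm_sub_le w (w - z)
  have h2 : 0 ≤ ε⁻¹ * (ε * ‖w‖ - ‖w - z‖) ^ 2 := by positivity
  have h3 : ε⁻¹ * (ε * ‖w‖ - ‖w - z‖) ^ 2 =
      ε * ‖w‖ ^ 2 + ε⁻¹ * ‖w - z‖ ^ 2 - 2 * (‖w‖ * ‖w - z‖) := by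
    field_simp
    ring
  nlinarith [norm_nonneg z, norm_nonneg w, norm_nonneg (w - z)]

theorem lintegral_Ico_comp_add (u : ℝ → ℝ≥0∞) (a b h : ℝ) :
    ∫⁻ x in Set.Ico a b, u (x + h) = ∫⁻ x in Set.Ico (a + h) (b + h), u x := by
  rw [← lintegral_indicator measurableSet_Ico, ← lintegral_indicator measurableSet_Ico,
    ← lintegral_add_right_eq_self ((Set.Ico (a + h) (b + h)).indicator u) h]
  refine lintegral_congr fun x => ?_
  simp [Set.indicator_apply]

/-- Fractional Hardy inequality of order `s / 2 < 1 / 2` on a half-line. -/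
theorem exists_lintegral_Ico_le_gagliardo {s : ℝ} (hs0 : 0 < s) (hs1 : s < 1) :
    ∃ C : ℝ≥0∞, C ≠ ⊤ ∧ ∀ (f : ℝ → ℂ) (a M : ℝ), Continuous f → (∀ x, ‖f x‖ ≤ M) → MemLp f 2 →
      ∫⁻ h in Set.Ioi (0 : ℝ), ENNReal.ofReal (h ^ (-1 - s)) *
          ∫⁻ x in Set.Ico a (a + h), ‖f x‖ₑ ^ 2 ≤
        C * ∫⁻ h in Set.Ioi (0 : ℝ), ENNReal.ofReal (h ^ (-1 - s)) *
          ∫⁻ x, ‖f (x + h) - f x‖ₑ ^ 2 := by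
  set q : ℝ := 2 ^ s with hq
  have hq1 : 1 ≤ q := Real.one_le_rpow one_le_two hs0.le
  have hq2 : q < 2 := by
    simpa using Real.rpow_lt_rpow_of_exponent_lt one_lt_two hs1
  set ε : ℝ := (2 - q) / 2 with hε
  have hε0 : 0 < ε := by linarith
  set κ : ℝ := 2 + ε - (1 + ε) * q with hκ
  have hκ0 : 0 < κ := by
    have : κ = (2 - q) * (3 - q) / 2 := by rw [hκ, hε]; ring
    rw [this]
    exact div_pos (mul_pos (by linarith) (by linarith)) two_pos
  refine ⟨(ENNReal.ofReal κ)⁻¹ * ENNReal.ofReal (1 + ε⁻¹),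
    ENNReal.mul_ne_top (by simpa using hκ0) ENNReal.ofReal_ne_top, fun f a M hf hM hf2 => ?_⟩
  set A : ℝ → ℝ≥0∞ := fun h => ∫⁻ x in Set.Ico a (a + h), ‖f x‖ₑ ^ 2 with hA
  set B : ℝ → ℝ≥0∞ := fun h => ∫⁻ x in Set.Ico a (a + h), ‖f (x + h)‖ₑ ^ 2 with hB
  set D : ℝ → ℝ≥0∞ := fun h => ∫⁻ x, ‖f (x + h) - f x‖ₑ ^ 2 with hD
  set w : ℝ → ℝ≥0∞ := fun h => ENNReal.ofReal (h ^ (-1 - s)) with hw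
  have hwm : Measurable w := by fun_prop
  have hAm : Measurable A := by
    refine Monotone.measurable fun h k hhk => ?_
    exact lintegral_mono_set (Set.Ico_subset_Ico_right (by linarith))
  have hDm : Measurable D := by
    refine Measurable.lintegral_prod_right' (f := fun p : ℝ × ℝ => ‖f (p.2 + p.1) - f p.2‖ₑ ^ 2) ?_
    have hc : Continuous fun p : ℝ × ℝ => f (p.2 + p.1) - f p.2 := by fun_prop
    exact hc.measurable.enorm.pow_const 2
  have hAfin : ∫⁻ h in Set.Ioi (0 : ℝ), w h * A h ≠ ⊤ := by
    refine lintegral_Ioi_rpow_mul_ne_top (p := 1) (M := ENNReal.ofReal M ^ 2)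
      (L := ∫⁻ x, ‖f x‖ₑ ^ 2) hs0 hs1 (by simp) ?_ (fun h hh _ => ?_)
      fun h => setLIntegral_le_lintegral _ _
    · have := (lintegral_rpow_enorm_lt_top_of_eLpNorm_lt_top two_ne_zero ENNReal.ofNat_ne_top
        hf2.2).ne
      simpa using this
    · calc A h ≤ ∫⁻ x in Set.Ico a (a + h), ENNReal.ofReal M ^ 2 := by
            refine lintegral_mono fun x => ?_
            gcongr
            rw [← ofReal_norm]
            exact ENNReal.ofReal_le_ofReal (hM x)
        _ = _ := by simp
  have hpt : ∀ h, A h ≤ ENNReal.ofReal (1 + ε) * B h + ENNReal.ofReal (1 + ε⁻¹) * D h := fun h => by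
    calc A h ≤ ∫⁻ x in Set.Ico a (a + h), (ENNReal.ofReal (1 + ε) * ‖f (x + h)‖ₑ ^ 2 +
          ENNReal.ofReal (1 + ε⁻¹) * ‖f (x + h) - f x‖ₑ ^ 2) :=
          lintegral_mono fun x => enorm_sq_le_add_enorm_sub_sq hε0 _ _
      _ = ENNReal.ofReal (1 + ε) * B h +
          ENNReal.ofReal (1 + ε⁻¹) * ∫⁻ x in Set.Ico a (a + h), ‖f (x + h) - f x‖ₑ ^ 2 := by
          rw [lintegral_add_left (by have := hf.measurable; fun_prop),
            lintegral_const_mul' _ _ ENNReal.ofReal_ne_top,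
            lintegral_const_mul' _ _ ENNReal.ofReal_ne_top]
      _ ≤ _ := by
          gcongr
          exact setLIntegral_le_lintegral _ _
  have hsplit : ∀ h, 0 < h → A h + B h = A (2 * h) := fun h hh => by
    simp only [hA, hB]
    rw [lintegral_Ico_comp_add (fun x => ‖f x‖ₑ ^ 2), ← lintegral_union measurableSet_Ico,
      Set.Ico_union_Ico_eq_Ico (by linarith) (by linarith)]
    · congr 3; ring
    · exact Set.disjoint_left.2 fun x h1 h2 => absurd h1.2 (not_lt.2 h2.1)
  set J := ∫⁻ h in Set.Ioi (0 : ℝ), w h * A h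
  set K := ∫⁻ h in Set.Ioi (0 : ℝ), w h * D h
  have hJB : J + ∫⁻ h in Set.Ioi (0 : ℝ), w h * B h = ENNReal.ofReal q * J := by
    rw [← lintegral_add_left (by fun_prop), ← lintegral_Ioi_rpow_mul_comp_mul_left two_pos s A]
    refine setLIntegral_congr_fun measurableSet_Ioi fun h hh => ?_
    simp only [← mul_add, hsplit h hh, hw]
  have hJ : J ≤ ENNReal.ofReal (1 + ε) * (∫⁻ h in Set.Ioi (0 : ℝ), w h * B h) +
      ENNReal.ofReal (1 + ε⁻¹) * K := by
    rw [← lintegral_const_mul' _ _ ENNReal.ofReal_ne_top,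
      ← lintegral_const_mul' _ _ ENNReal.ofReal_ne_top,
      ← lintegral_add_right _ (by fun_prop)]
    refine lintegral_mono fun h => ?_
    calc w h * A h ≤ w h * (ENNReal.ofReal (1 + ε) * B h + ENNReal.ofReal (1 + ε⁻¹) * D h) := by
          gcongr; exact hpt h
      _ = _ := by ring
  have hcancel : ENNReal.ofReal κ * J ≤ ENNReal.ofReal (1 + ε⁻¹) * K := by
    have hfin : ENNReal.ofReal ((1 + ε) * q) * J ≠ ⊤ :=
      ENNReal.mul_ne_top ENNReal.ofReal_ne_top hAfin
    refine (ENNReal.add_le_add_iff_left hfin).1 ?_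
    calc ENNReal.ofReal ((1 + ε) * q) * J + ENNReal.ofReal κ * J
        = J + ENNReal.ofReal (1 + ε) * J := by
          rw [← add_mul, ← ENNReal.ofReal_add (by positivity) hκ0.le,
            ← one_add_mul (ENNReal.ofReal (1 + ε)), ← ENNReal.ofReal_one,
            ← ENNReal.ofReal_add zero_le_one (by positivity)]
          congr 2; rw [hκ]; ring
      _ ≤ ENNReal.ofReal (1 + ε) * (∫⁻ h in Set.Ioi (0 : ℝ), w h * B h) +
          ENNReal.ofReal (1 + ε⁻¹) * K + ENNReal.ofReal (1 + ε) * J := by gcongr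
      _ = ENNReal.ofReal (1 + ε) * (J + ∫⁻ h in Set.Ioi (0 : ℝ), w h * B h) +
          ENNReal.ofReal (1 + ε⁻¹) * K := by ring
      _ = _ := by rw [hJB, ← mul_assoc, ← ENNReal.ofReal_mul (by positivity)]
  rw [mul_assoc, mul_comm, ← div_eq_mul_inv,
    ENNReal.le_div_iff_mul_le (by simp [hκ0]) (by simp), mul_comm]
  exact hcancel

theorem enorm_sq_indicator_Icc_sub_le (f : ℝ → ℂ) (a₁ a₂ : ℝ) {h : ℝ} (hh : 0 < h) (x : ℝ) :
    ‖(Set.Icc a₁ a₂).indicator f (x + h) - (Set.Icc a₁ a₂).indicator f x‖ₑ ^ 2 ≤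
      ‖f (x + h) - f x‖ₑ ^ 2 +
        ((Set.Ico a₁ (a₁ + h)).indicator (fun y => ‖f y‖ₑ ^ 2) (x + h) +
          (Set.Ico (-a₂) (-a₂ + h)).indicator (fun y => ‖f (-y)‖ₑ ^ 2) (-x)) := by
  by_cases h1 : x + h ∈ Set.Icc a₁ a₂ <;> by_cases h2 : x ∈ Set.Icc a₁ a₂
  · simp [h1, h2]
  · have h3 : x + h ∈ Set.Ico a₁ (a₁ + h) := by
      refine ⟨h1.1, ?_⟩
      by_contra H
      exact h2 ⟨by linarith, by linarith [h1.2]⟩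
    rw [Set.indicator_of_mem h1, Set.indicator_of_notMem h2, Set.indicator_of_mem h3, sub_zero]
    exact le_add_left le_self_add
  · have h3 : -x ∈ Set.Ico (-a₂) (-a₂ + h) := by
      refine ⟨by linarith [h2.2], ?_⟩
      by_contra H
      exact h1 ⟨by linarith [h2.1], by linarith⟩
    rw [Set.indicator_of_notMem h1, Set.indicator_of_mem h2, Set.indicator_of_mem h3, zero_sub,
      enorm_neg, neg_neg]
    exact le_add_left le_add_self
  · simp [h1, h2]

theorem exists_gagliardo_indicator_Icc_le {s : ℝ} (hs0 : 0 < s) (hs1 : s < 1) :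
    ∃ C : ℝ≥0∞, C ≠ ⊤ ∧ ∀ (f : ℝ → ℂ) (a₁ a₂ M : ℝ), Continuous f → (∀ x, ‖f x‖ ≤ M) → MemLp f 2 →
      ∫⁻ h in Set.Ioi (0 : ℝ), ENNReal.ofReal (h ^ (-1 - s)) *
          ∫⁻ x, ‖(Set.Icc a₁ a₂).indicator f (x + h) - (Set.Icc a₁ a₂).indicator f x‖ₑ ^ 2 ≤
        C * ∫⁻ h in Set.Ioi (0 : ℝ), ENNReal.ofReal (h ^ (-1 - s)) *
          ∫⁻ x, ‖f (x + h) - f x‖ₑ ^ 2 := by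
  obtain ⟨C, hC, hardy⟩ := exists_lintegral_Ico_le_gagliardo hs0 hs1
  refine ⟨1 + (C + C), by simp [hC], fun f a₁ a₂ M hf hM hf2 => ?_⟩
  have hleft := hardy f a₁ M hf hM hf2
  have hright := hardy (fun x => f (-x)) (-a₂) M (by fun_prop) (fun x => hM _)
    (hf2.comp_measurePreserving (Measure.measurePreserving_neg volume))
  have hrefl : ∀ h : ℝ, ∫⁻ x, ‖f (-(x + h)) - f (-x)‖ₑ ^ 2 = ∫⁻ x, ‖f (x + h) - f x‖ₑ ^ 2 :=
    fun h => by
      rw [← lintegral_add_right_eq_self _ (-h), ← lintegral_neg_eq_self]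
      refine lintegral_congr fun x => ?_
      rw [← enorm_neg]
      congr 2
      ring_nf
  simp only [hrefl] at hright
  set D : ℝ → ℝ≥0∞ := fun h => ∫⁻ x, ‖f (x + h) - f x‖ₑ ^ 2 with hD
  set A : ℝ → ℝ≥0∞ := fun h => ∫⁻ x in Set.Ico a₁ (a₁ + h), ‖f x‖ₑ ^ 2 with hA
  set B : ℝ → ℝ≥0∞ := fun h => ∫⁻ x in Set.Ico (-a₂) (-a₂ + h), ‖f (-x)‖ₑ ^ 2 with hB
  set w : ℝ → ℝ≥0∞ := fun h => ENNReal.ofReal (h ^ (-1 - s)) with hw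
  have hwm : Measurable w := by fun_prop
  have hAm : Measurable A := Monotone.measurable fun h k hhk =>
    lintegral_mono_set (Set.Ico_subset_Ico_right (by linarith))
  have hBm : Measurable B := Monotone.measurable fun h k hhk =>
    lintegral_mono_set (Set.Ico_subset_Ico_right (by linarith))
  have hfm := hf.measurable
  have hpt : ∀ h, 0 < h →
      ∫⁻ x, ‖(Set.Icc a₁ a₂).indicator f (x + h) - (Set.Icc a₁ a₂).indicator f x‖ₑ ^ 2 ≤
        D h + (A h + B h) := fun h hh => by
    refine (lintegral_mono (enorm_sq_indicator_Icc_sub_le f a₁ a₂ hh)).trans_eq ?_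
    have hm : Measurable ((Set.Ico a₁ (a₁ + h)).indicator fun y => ‖f y‖ₑ ^ 2) :=
      Measurable.indicator (by fun_prop) measurableSet_Ico
    rw [lintegral_add_left (by fun_prop), lintegral_add_left (by fun_prop),
      lintegral_add_right_eq_self ((Set.Ico a₁ (a₁ + h)).indicator fun y => ‖f y‖ₑ ^ 2),
      lintegral_neg_eq_self ((Set.Ico (-a₂) (-a₂ + h)).indicator fun y => ‖f (-y)‖ₑ ^ 2),
      lintegral_indicator measurableSet_Ico, lintegral_indicator measurableSet_Ico]
  calc _ ≤ ∫⁻ h in Set.Ioi (0 : ℝ), (w h * D h + (w h * A h + w h * B h)) := by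
        refine setLIntegral_mono' measurableSet_Ioi fun h hh => ?_
        rw [← mul_add, ← mul_add]
        gcongr
        exact hpt h hh
    _ = (∫⁻ h in Set.Ioi (0 : ℝ), w h * D h) + ((∫⁻ h in Set.Ioi (0 : ℝ), w h * A h) +
        ∫⁻ h in Set.Ioi (0 : ℝ), w h * B h) := by
        rw [lintegral_add_right _ (by fun_prop), lintegral_add_left (by fun_prop)]
    _ ≤ (∫⁻ h in Set.Ioi (0 : ℝ), w h * D h) + (C * (∫⁻ h in Set.Ioi (0 : ℝ), w h * D h) +
        C * ∫⁻ h in Set.Ioi (0 : ℝ), w h * D h) := by gcongr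
    _ = _ := by ring

theorem exists_lintegral_rpow_angularFourier_indicator_le {s : ℝ} (hs0 : 0 ≤ s) (hs1 : s < 1) :
    ∃ C : ℝ≥0∞, C ≠ ⊤ ∧ ∀ (f : ℝ → ℂ) (a₁ a₂ M : ℝ), Continuous f → (∀ x, ‖f x‖ ≤ M) →
      Integrable f → MemLp f 2 →
      ∫⁻ τ, ENNReal.ofReal (|τ| ^ s) * ‖angularFourier ((Set.Icc a₁ a₂).indicator f) τ‖ₑ ^ 2 ≤
        C * ∫⁻ τ, ENNReal.ofReal (|τ| ^ s) * ‖angularFourier f τ‖ₑ ^ 2 := by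
  rcases hs0.eq_or_lt with rfl | hs0
  · refine ⟨1, ENNReal.one_ne_top, fun f a₁ a₂ M _ _ hf1 hf2 => ?_⟩
    simp only [Real.rpow_zero, ENNReal.ofReal_one, one_mul]
    rw [lintegral_enorm_sq_angularFourier (hf1.indicator measurableSet_Icc)
      (hf2.indicator measurableSet_Icc), lintegral_enorm_sq_angularFourier hf1 hf2]
    gcongr with x
    exact enorm_indicator_le_enorm_self _ _
  · obtain ⟨C, hC, hbound⟩ := exists_gagliardo_indicator_Icc_le hs0 hs1
    refine ⟨C, hC, fun f a₁ a₂ M hf hM hf1 hf2 => ?_⟩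
    rw [← ENNReal.mul_le_mul_iff_right (gagliardoConst_ne_zero s) (gagliardoConst_ne_top hs0 hs1),
      mul_left_comm, ← gagliardo_eq_lintegral_angularFourier hs0 (hf1.indicator measurableSet_Icc)
      (hf2.indicator measurableSet_Icc), ← gagliardo_eq_lintegral_angularFourier hs0 hf1 hf2,
      mul_left_comm]
    gcongr
    exact hbound f a₁ a₂ M hf hM hf2

theorem exists_lintegral_one_add_rpow_angularFourier_indicator_le {s : ℝ} (hs0 : 0 ≤ s)
    (hs1 : s < 1) :
    ∃ C : ℝ≥0∞, C ≠ ⊤ ∧ ∀ (f : ℝ → ℂ) (a₁ a₂ M : ℝ), Continuous f → (∀ x, ‖f x‖ ≤ M) →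
      Integrable f → MemLp f 2 →
      ∫⁻ τ, ENNReal.ofReal ((1 + |τ|) ^ s) *
          ‖angularFourier ((Set.Icc a₁ a₂).indicator f) τ‖ₑ ^ 2 ≤
        C * ∫⁻ τ, ENNReal.ofReal ((1 + |τ|) ^ s) * ‖angularFourier f τ‖ₑ ^ 2 := by
  obtain ⟨C₀, hC₀, h₀⟩ := exists_lintegral_rpow_angularFourier_indicator_le le_rfl one_pos
  obtain ⟨C₁, hC₁, h₁⟩ := exists_lintegral_rpow_angularFourier_indicator_le hs0 hs1
  refine ⟨C₀ + C₁, by simp [hC₀, hC₁], fun f a₁ a₂ M hf hM hf1 hf2 => ?_⟩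
  have hm := (continuous_angularFourier
    (hf1.indicator (measurableSet_Icc (a := a₁) (b := a₂)))).measurable
  calc _ ≤ ∫⁻ τ, (ENNReal.ofReal (|τ| ^ (0 : ℝ)) *
          ‖angularFourier ((Set.Icc a₁ a₂).indicator f) τ‖ₑ ^ 2 + ENNReal.ofReal (|τ| ^ s) *
          ‖angularFourier ((Set.Icc a₁ a₂).indicator f) τ‖ₑ ^ 2) := by
        refine lintegral_mono fun τ => ?_
        rw [← add_mul, ← ENNReal.ofReal_add (by positivity) (by positivity)]
        gcongr
        simpa using Real.rpow_add_le_add_rpow zero_le_one (abs_nonneg τ) hs0 hs1.le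
    _ ≤ C₀ * (∫⁻ τ, ENNReal.ofReal (|τ| ^ (0 : ℝ)) * ‖angularFourier f τ‖ₑ ^ 2) +
        C₁ * ∫⁻ τ, ENNReal.ofReal (|τ| ^ s) * ‖angularFourier f τ‖ₑ ^ 2 := by
        rw [lintegral_add_left (by fun_prop)]
        exact add_le_add (h₀ f a₁ a₂ M hf hM hf1 hf2) (h₁ f a₁ a₂ M hf hM hf1 hf2)
    _ ≤ C₀ * (∫⁻ τ, ENNReal.ofReal ((1 + |τ|) ^ s) * ‖angularFourier f τ‖ₑ ^ 2) +
        C₁ * ∫⁻ τ, ENNReal.ofReal ((1 + |τ|) ^ s) * ‖angularFourier f τ‖ₑ ^ 2 := by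
        gcongr with τ τ
        · rw [Real.rpow_zero]
          exact Real.one_le_rpow (by simp) hs0
        · simp
    _ = _ := by ring

theorem integrable_one_add_rpow_mul_norm_angularFourier_sq {s : ℝ} (hs1 : s ≤ 1) (f : 𝓢(ℝ, ℂ)) :
    Integrable fun τ : ℝ => (1 + |τ|) ^ s * ‖angularFourier f τ‖ ^ 2 := by
  have hc : (2 * Real.pi)⁻¹ ≠ 0 := by positivity
  set φ : 𝓢(ℝ, ℂ) := 𝓕 f with hφ
  have hval : ∀ τ, angularFourier f τ = φ ((2 * Real.pi)⁻¹ * τ) := fun τ => by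
    rw [angularFourier_eq, hφ, SchwartzMap.fourier_coe]
  have hdom : Integrable fun ξ : ℝ =>
      (SchwartzMap.seminorm ℝ 0 0 φ) * (‖φ ξ‖ + 2 * Real.pi * (‖ξ‖ ^ 1 * ‖φ ξ‖)) :=
    (φ.integrable.norm.add ((φ.integrable_pow_mul volume 1).const_mul _)).const_mul _
  refine (hdom.comp_mul_left' hc).mono' ?_ (.of_forall fun τ => ?_)
  · have hcont := continuous_angularFourier f.integrable
    exact ((Continuous.rpow_const (by fun_prop) fun τ => .inl (by positivity)).mul
      (hcont.norm.pow 2)).aestronglyMeasurable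
  · rw [Real.norm_of_nonneg (by positivity), hval]
    set z := φ ((2 * Real.pi)⁻¹ * τ) with hz
    have h1 : (1 + |τ|) ^ s ≤ 1 + |τ| := by
      simpa using Real.rpow_le_rpow_of_exponent_le (by simp : 1 ≤ 1 + |τ|) hs1
    have h2 : ‖z‖ ≤ SchwartzMap.seminorm ℝ 0 0 φ := SchwartzMap.norm_le_seminorm ℝ φ _
    have h3 : 2 * Real.pi * (‖(2 * Real.pi)⁻¹ * τ‖ ^ 1 * ‖z‖) = |τ| * ‖z‖ := by
      rw [pow_one, norm_mul, Real.norm_of_nonneg (by positivity), Real.norm_eq_abs]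
      field_simp
    rw [h3]
    calc _ ≤ (1 + |τ|) * (SchwartzMap.seminorm ℝ 0 0 φ * ‖z‖) := by
          rw [sq]; gcongr
      _ = _ := by ring

/-- Multiplication by a sharp time cutoff is bounded on `H^b(ℝ)` for `0 ≤ b < 1/2`,
uniformly in the interval: with `𝓕f(τ) = ∫ e^{-itτ} f(t) dt`,
`∫ (1+|τ|)^{2b} |𝓕(χ_{[a₁,a₂]} f)(τ)|² dτ ≤ C ∫ (1+|τ|)^{2b} |𝓕f(τ)|² dτ`. -/
theorem stmt_14 (b : ℝ) (hb0 : 0 ≤ b) (hb : b < 1/2) :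
    ∃ C : ℝ, 0 < C ∧
      ∀ (a₁ a₂ : ℝ) (f : SchwartzMap ℝ ℂ),
        (∫ τ : ℝ, (1 + |τ|) ^ (2 * b) *
            ‖∫ t : ℝ, Complex.exp (-Complex.I * t * τ) *
              Set.indicator (Set.Icc a₁ a₂) (fun s => f s) t‖ ^ 2)
          ≤ C * ∫ τ : ℝ, (1 + |τ|) ^ (2 * b) *
              ‖∫ t : ℝ, Complex.exp (-Complex.I * t * τ) * f t‖ ^ 2 := by
  obtain ⟨C, hC, hbound⟩ := exists_lintegral_one_add_rpow_angularFourier_indicator_le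
    (s := 2 * b) (by linarith) (by linarith)
  refine ⟨C.toReal + 1, by positivity, fun a₁ a₂ f => ?_⟩
  have hint := integrable_one_add_rpow_mul_norm_angularFourier_sq (s := 2 * b) (by linarith) f
  have hnonneg : ∀ u : ℝ → ℂ, ∀ τ : ℝ, 0 ≤ (1 + |τ|) ^ (2 * b) * ‖angularFourier u τ‖ ^ 2 :=
    fun u τ => by positivity
  have hconv : ∀ (u : ℝ → ℂ) (τ : ℝ),
      ENNReal.ofReal ((1 + |τ|) ^ (2 * b) * ‖angularFourier u τ‖ ^ 2) =
        ENNReal.ofReal ((1 + |τ|) ^ (2 * b)) * ‖angularFourier u τ‖ₑ ^ 2 := fun u τ => by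
    rw [ENNReal.ofReal_mul (by positivity), ENNReal.ofReal_pow (norm_nonneg _), ofReal_norm]
  have hmain := hbound f a₁ a₂ (SchwartzMap.seminorm ℝ 0 0 f) f.continuous
    (SchwartzMap.norm_le_seminorm ℝ f) f.integrable (f.memLp 2)
  simp only [← hconv] at hmain
  rw [← ofReal_integral_eq_lintegral_ofReal hint (.of_forall (hnonneg f))] at hmain
  have hR : 0 ≤ ∫ τ : ℝ, (1 + |τ|) ^ (2 * b) * ‖angularFourier f τ‖ ^ 2 :=
    integral_nonneg (hnonneg f)
  change ∫ τ : ℝ, (1 + |τ|) ^ (2 * b) *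
      ‖angularFourier ((Set.Icc a₁ a₂).indicator f) τ‖ ^ 2 ≤
    (C.toReal + 1) * ∫ τ : ℝ, (1 + |τ|) ^ (2 * b) * ‖angularFourier f τ‖ ^ 2
  calc _ ≤ (∫⁻ τ : ℝ, ENNReal.ofReal ((1 + |τ|) ^ (2 * b) *
          ‖angularFourier ((Set.Icc a₁ a₂).indicator f) τ‖ ^ 2)).toReal := by
        rw [integral_eq_lintegral_of_nonneg_ae (.of_forall (hnonneg _))]
        have hcont := continuous_angularFourier
          (f.integrable.indicator (measurableSet_Icc (a := a₁) (b := a₂)))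
        exact ((Continuous.rpow_const (by fun_prop) fun τ => .inl (by positivity)).mul
          (hcont.norm.pow 2)).aestronglyMeasurable
    _ ≤ C.toReal * ∫ τ : ℝ, (1 + |τ|) ^ (2 * b) * ‖angularFourier f τ‖ ^ 2 := by
        refine (ENNReal.toReal_mono (ENNReal.mul_ne_top hC ENNReal.ofReal_ne_top) hmain).trans_eq ?_
        rw [ENNReal.toReal_mul, ENNReal.toReal_ofReal hR]
    _ ≤ _ := by gcongr; linarith
end

section
/- For s ∈ ℝ, b ∈ [0, 1/2) and ε > 0 there exists a constant C > 0 such that for every δ ∈ (0, 1] and every measurable F : ℤ × ℝ → ℂ with ‖F‖_{X^{s,1/2}} < ∞, the function G(n, τ) = (1/2π) ∫_ℝ K_δ(τ − σ) F(n, σ) dσ satisfies ‖G‖_{X^{s,b}} ≤ C δ^{1/2 − b − ε} ‖F‖_{X^{s,1/2}}, where K_δ(τ) = 2 sin(δτ)/τ is the Fourier transform of the indicator function of [−δ, δ]. -/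
open MeasureTheory
open scoped ENNReal

/-- The Bourgain norm `‖F‖_{X^{s,b}}` of `F : ℤ × ℝ → ℂ` (given on the Fourier side):
`( Σ_n ∫ (1+|n|)^{2s} (1+|τ-n²|)^{2b} |F(n,τ)|² dτ )^{1/2}`, valued in `ℝ≥0∞`. -/
noncomputable def XNorm (s b : ℝ) (F : ℤ → ℝ → ℂ) : ℝ≥0∞ :=
  (∑' n : ℤ, ∫⁻ τ : ℝ, ENNReal.ofReal
      ((1 + |(n : ℝ)|) ^ (2 * s) * (1 + |τ - (n : ℝ) ^ 2|) ^ (2 * b) * ‖F n τ‖ ^ 2))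
    ^ ((1 : ℝ) / 2)

/-- The sinc kernel interpolates between its bounds `2 δ` and `2 / |x|`. -/
lemma abs_sinc_kernel_le {δ θ : ℝ} (hδ : 0 < δ) (hδ1 : δ ≤ 1) (hθ0 : 0 ≤ θ) (hθ1 : θ ≤ 1)
    (x : ℝ) :
    |2 * Real.sin (δ * x) / x| ≤ 4 * δ ^ θ * (1 + |x|) ^ (θ - 1) := by
  have hw : 0 < 1 + |x| := by positivity
  set K := |2 * Real.sin (δ * x) / x| with hK
  have hK0 : 0 ≤ K := abs_nonneg _
  have hKx : K * |x| ≤ 2 := by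
    rcases eq_or_ne x 0 with rfl | hx
    · simp
    · rw [hK, ← abs_mul, div_mul_cancel₀ _ hx, abs_mul, abs_two]
      linarith [Real.abs_sin_le_one (δ * x)]
  have hKδ : K ≤ 2 * δ := by
    rcases eq_or_ne x 0 with rfl | hx
    · simp [hK, hδ.le]
    · rw [hK, abs_div, div_le_iff₀ (abs_pos.2 hx), abs_mul, abs_two]
      have h := Real.abs_sin_le_abs (x := δ * x)
      rw [abs_mul, abs_of_pos hδ] at h
      linarith
  have hK4 : K ≤ 4 * (1 + |x|)⁻¹ := by
    rw [← div_eq_mul_inv, le_div_iff₀ hw]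
    linarith
  calc K = K ^ θ * K ^ (1 - θ) := by
        rw [← Real.rpow_add_of_nonneg hK0 hθ0 (by linarith)]; simp
    _ ≤ (4 * δ) ^ θ * (4 * (1 + |x|)⁻¹) ^ (1 - θ) := by
        have : K ≤ 4 * δ := by linarith
        have : 0 ≤ 1 - θ := by linarith
        gcongr
    _ = 4 * δ ^ θ * (1 + |x|) ^ (θ - 1) := by
        rw [Real.mul_rpow (by norm_num) hδ.le, Real.mul_rpow (by norm_num) (by positivity),
          Real.inv_rpow hw.le, ← Real.rpow_neg hw.le, neg_sub]
        have : (4 : ℝ) ^ θ * 4 ^ (1 - θ) = 4 := by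
          rw [← Real.rpow_add (by norm_num)]; simp
        linear_combination δ ^ θ * (1 + |x|) ^ (θ - 1) * this

lemma rpow_neg_mul_rpow_neg_le_add {x y p q : ℝ} (hx : 0 < x) (hy : 0 < y) (hp : 0 ≤ p)
    (hq : 0 ≤ q) : x ^ (-p) * y ^ (-q) ≤ x ^ (-(p + q)) + y ^ (-(p + q)) := by
  rw [neg_add, Real.rpow_add hx, Real.rpow_add hy]
  rcases le_total x y with h | h
  · have : y ^ (-q) ≤ x ^ (-q) := Real.rpow_le_rpow_of_nonpos hx h (by linarith)
    have : x ^ (-p) * y ^ (-q) ≤ x ^ (-p) * x ^ (-q) := by gcongr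
    have : 0 ≤ y ^ (-p) * y ^ (-q) := by positivity
    linarith
  · have : x ^ (-p) ≤ y ^ (-p) := Real.rpow_le_rpow_of_nonpos hy h (by linarith)
    have : x ^ (-p) * y ^ (-q) ≤ y ^ (-p) * y ^ (-q) := by gcongr
    have : 0 ≤ x ^ (-p) * x ^ (-q) := by positivity
    linarith

lemma exists_lintegral_rpow_mul_rpow_le {r : ℝ} (hr : 1 < r) :
    ∃ J : ℝ, 0 < J ∧ ∀ p q : ℝ, 0 ≤ p → 0 ≤ q → p + q = r → ∀ u v : ℝ,
      ∫⁻ x : ℝ, ENNReal.ofReal ((1 + |x - u|) ^ (-p) * (1 + |x - v|) ^ (-q)) ≤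
        ENNReal.ofReal J := by
  have hfin : ∫⁻ x : ℝ, ENNReal.ofReal ((1 + |x|) ^ (-r)) < ⊤ := by
    simpa using finite_integral_one_add_norm (E := ℝ) (μ := volume) (r := r) (by simpa using hr)
  set I := ∫⁻ x : ℝ, ENNReal.ofReal ((1 + |x|) ^ (-r)) with hI
  refine ⟨2 * I.toReal + 1, by positivity, fun p q hp hq hpq u v => ?_⟩
  have hshift : ∀ u : ℝ, ∫⁻ x : ℝ, ENNReal.ofReal ((1 + |x - u|) ^ (-r)) = I := fun u =>
    lintegral_sub_right_eq_self (fun x : ℝ => ENNReal.ofReal ((1 + |x|) ^ (-r))) u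
  calc _ ≤ ∫⁻ x : ℝ, (ENNReal.ofReal ((1 + |x - u|) ^ (-r)) +
          ENNReal.ofReal ((1 + |x - v|) ^ (-r))) := by
        refine lintegral_mono fun x => ?_
        rw [← ENNReal.ofReal_add (by positivity) (by positivity), ← hpq]
        exact ENNReal.ofReal_le_ofReal
          (rpow_neg_mul_rpow_neg_le_add (by positivity) (by positivity) hp hq)
    _ = I + I := by
        rw [lintegral_add_left (by fun_prop), hshift, hshift]
    _ = ENNReal.ofReal (2 * I.toReal) := by
        rw [two_mul, ENNReal.ofReal_add (by positivity) (by positivity),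
          ENNReal.ofReal_toReal hfin.ne]
    _ ≤ _ := ENNReal.ofReal_le_ofReal (by linarith)

lemma lintegral_mul_sq_le (f g : ℝ → ℝ≥0∞) (hf : AEMeasurable f) (hg : AEMeasurable g) :
    (∫⁻ x, f x * g x) ^ 2 ≤ (∫⁻ x, f x ^ 2) * ∫⁻ x, g x ^ 2 := by
  have h := ENNReal.lintegral_mul_le_Lp_mul_Lq volume Real.HolderConjugate.two_two hf hg
  have hsq : ∀ a : ℝ≥0∞, (a ^ (1 / 2 : ℝ)) ^ 2 = a := fun a => by
    rw [← ENNReal.rpow_natCast, ← ENNReal.rpow_mul]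
    norm_num
  simpa only [mul_pow, hsq, Pi.mul_apply, ENNReal.rpow_two] using pow_le_pow_left₀ zero_le h 2

/-- The fractional-integration kernel `(1 + |τ - σ|) ^ (θ - 1)`, weighted by `1 + |σ - m|`. -/
lemma exists_lintegral_rpow_mul_rpow_weight_le {b θ : ℝ} (hb0 : 0 ≤ b)
    (hθ : 0 < θ) (hbθ : b + θ < 1 / 2) :
    ∃ J : ℝ, 0 < J ∧ ∀ m τ : ℝ,
      ∫⁻ σ : ℝ, ENNReal.ofReal ((1 + |σ - τ|) ^ (θ - 1) * (1 + |σ - m|) ^ (-1 : ℝ)) ≤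
        ENNReal.ofReal (J * (1 + |τ - m|) ^ (-(b + 1 / 2))) := by
  obtain ⟨J, hJ, h⟩ := exists_lintegral_rpow_mul_rpow_le (r := 3 / 2 - b - θ) (by linarith)
  refine ⟨J + J, by positivity, fun m τ => ?_⟩
  obtain ⟨a, ha⟩ : ∃ a, a = b + 1 / 2 := ⟨_, rfl⟩
  rw [← ha]
  have hW : ∀ x : ℝ, 0 < 1 + |x| := fun x => by positivity
  have key : ∀ σ : ℝ, (1 + |σ - τ|) ^ (θ - 1) * (1 + |σ - m|) ^ (-1 : ℝ) ≤
      (1 + |τ - m|) ^ (-a) * ((1 + |σ - τ|) ^ (-(1 - θ - a)) * (1 + |σ - m|) ^ (-1 : ℝ) +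
        (1 + |σ - τ|) ^ (-(1 - θ)) * (1 + |σ - m|) ^ (-(1 - a))) := by
    intro σ
    have hle : (1 + |τ - m|) ^ a ≤ (1 + |σ - τ|) ^ a + (1 + |σ - m|) ^ a := by
      refine le_trans (Real.rpow_le_rpow (hW _).le ?_ (by linarith))
        (Real.rpow_add_le_add_rpow (hW _).le (hW _).le (by linarith) (by linarith))
      have := abs_sub_le τ σ m
      rw [abs_sub_comm τ σ] at this
      linarith
    rw [Real.rpow_neg (hW _).le a, ← div_eq_inv_mul, le_div_iff₀ (Real.rpow_pos_of_pos (hW _) _)]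
    have e1 : -(1 - θ - a) = (θ - 1) + a := by ring
    have e2 : -(1 - a) = -1 + a := by ring
    rw [e1, e2, Real.rpow_add (hW (σ - τ)), Real.rpow_add (hW (σ - m)), neg_sub]
    have hmul := mul_le_mul_of_nonneg_left hle
      (show 0 ≤ (1 + |σ - τ|) ^ (θ - 1) * (1 + |σ - m|) ^ (-1 : ℝ) by positivity)
    refine hmul.trans (le_of_eq ?_)
    ring
  calc _ ≤ ∫⁻ σ : ℝ, ENNReal.ofReal ((1 + |τ - m|) ^ (-a)) *
        (ENNReal.ofReal ((1 + |σ - τ|) ^ (-(1 - θ - a)) * (1 + |σ - m|) ^ (-1 : ℝ)) +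
        ENNReal.ofReal ((1 + |σ - τ|) ^ (-(1 - θ)) * (1 + |σ - m|) ^ (-(1 - a)))) := by
        refine lintegral_mono fun σ => ?_
        rw [← ENNReal.ofReal_add (by positivity) (by positivity),
          ← ENNReal.ofReal_mul (by positivity)]
        exact ENNReal.ofReal_le_ofReal (key σ)
    _ ≤ ENNReal.ofReal ((1 + |τ - m|) ^ (-a)) * (ENNReal.ofReal J + ENNReal.ofReal J) := by
        rw [lintegral_const_mul _ (by fun_prop), lintegral_add_left (by fun_prop)]
        gcongr
        · exact h _ _ (by linarith) (by norm_num) (by linarith) _ _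
        · exact h _ _ (by linarith) (by linarith) (by linarith) _ _
    _ = _ := by
        rw [← ENNReal.ofReal_add hJ.le hJ.le, ← ENNReal.ofReal_mul (by positivity), mul_comm]

/-- Weighted `L²` bound (Schur test) for the kernel `(1 + |τ - σ|) ^ (θ - 1)`, uniformly in the
centre `m` of the weights. -/
lemma exists_weighted_lintegral_sq_le {b θ : ℝ} (hb0 : 0 ≤ b)
    (hθ : 0 < θ) (hbθ : b + θ < 1 / 2) :
    ∃ D : ℝ, 0 < D ∧ ∀ (m : ℝ) (f : ℝ → ℝ≥0∞), Measurable f →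
      ∫⁻ τ : ℝ, ENNReal.ofReal ((1 + |τ - m|) ^ (2 * b)) *
          (∫⁻ σ : ℝ, ENNReal.ofReal ((1 + |τ - σ|) ^ (θ - 1)) * f σ) ^ 2 ≤
        ENNReal.ofReal D * ∫⁻ σ : ℝ, ENNReal.ofReal (1 + |σ - m|) * f σ ^ 2 := by
  obtain ⟨J, hJ, h⟩ := exists_lintegral_rpow_mul_rpow_le (r := 3 / 2 - b - θ) (by linarith)
  obtain ⟨B, hB_pos, hB⟩ := exists_lintegral_rpow_mul_rpow_weight_le hb0 hθ hbθ
  refine ⟨B * J, by positivity, fun m f hf => ?_⟩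
  have hW : ∀ x : ℝ, 0 < 1 + |x| := fun x => by positivity
  have hCS : ∀ τ : ℝ, (∫⁻ σ : ℝ, ENNReal.ofReal ((1 + |τ - σ|) ^ (θ - 1)) * f σ) ^ 2 ≤
      ENNReal.ofReal (B * (1 + |τ - m|) ^ (-(b + 1 / 2))) *
        ∫⁻ σ : ℝ, ENNReal.ofReal ((1 + |τ - σ|) ^ (θ - 1)) *
          (ENNReal.ofReal (1 + |σ - m|) * f σ ^ 2) := by
    intro τ
    have hcs := lintegral_mul_sq_le
      (fun σ => ENNReal.ofReal ((1 + |τ - σ|) ^ ((θ - 1) / 2) * (1 + |σ - m|) ^ (-1 / 2 : ℝ)))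
      (fun σ => ENNReal.ofReal ((1 + |τ - σ|) ^ ((θ - 1) / 2) * (1 + |σ - m|) ^ (1 / 2 : ℝ)) * f σ)
      (by fun_prop) (by fun_prop)
    have hsq : ∀ (x c : ℝ), ((1 + |x|) ^ (c / 2)) ^ 2 = (1 + |x|) ^ c := fun x c => by
      rw [← Real.rpow_natCast, ← Real.rpow_mul (hW x).le]; norm_num
    refine le_trans (le_of_eq ?_) (hcs.trans (mul_le_mul' (le_trans (le_of_eq ?_) (hB m τ))
      (le_of_eq ?_)))
    · congr 1
      refine lintegral_congr fun σ => ?_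
      rw [← mul_assoc, ← ENNReal.ofReal_mul (by positivity)]
      congr 2
      have e1 := hsq (τ - σ) (θ - 1)
      have e2 : (1 + |σ - m|) ^ (-1 / 2 : ℝ) * (1 + |σ - m|) ^ (1 / 2 : ℝ) = 1 := by
        rw [← Real.rpow_add (hW _)]; norm_num
      rw [← e1]
      linear_combination -((1 + |τ - σ|) ^ ((θ - 1) / 2)) ^ 2 * e2
    · refine lintegral_congr fun σ => ?_
      rw [← ENNReal.ofReal_pow (by positivity), mul_pow, hsq, hsq, abs_sub_comm τ σ]
    · refine lintegral_congr fun σ => ?_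
      rw [mul_pow, ← ENNReal.ofReal_pow (by positivity), mul_pow, hsq, hsq, Real.rpow_one,
        ENNReal.ofReal_mul (by positivity), mul_assoc]
  calc _ ≤ ∫⁻ τ : ℝ, ∫⁻ σ : ℝ, ENNReal.ofReal B *
        (ENNReal.ofReal ((1 + |τ - σ|) ^ (-(1 - θ)) * (1 + |τ - m|) ^ (-(1 / 2 - b))) *
          (ENNReal.ofReal (1 + |σ - m|) * f σ ^ 2)) := by
        refine lintegral_mono fun τ => ?_
        refine (mul_le_mul_right (hCS τ) _).trans (le_of_eq ?_)
        rw [← mul_assoc, ← lintegral_const_mul _ (by fun_prop)]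
        refine lintegral_congr fun σ => ?_
        rw [← mul_assoc, ← mul_assoc (ENNReal.ofReal B), ← ENNReal.ofReal_mul (by positivity),
          ← ENNReal.ofReal_mul (by positivity), ← ENNReal.ofReal_mul (by positivity)]
        congr 2
        have e : (1 + |τ - m|) ^ (-(1 / 2 - b)) =
            (1 + |τ - m|) ^ (2 * b) * (1 + |τ - m|) ^ (-(b + 1 / 2)) := by
          rw [← Real.rpow_add (hW _)]; congr 1; ring
        rw [e, neg_sub]
        ring
    _ = ∫⁻ σ : ℝ, ∫⁻ τ : ℝ, ENNReal.ofReal B *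
        (ENNReal.ofReal ((1 + |τ - σ|) ^ (-(1 - θ)) * (1 + |τ - m|) ^ (-(1 / 2 - b))) *
          (ENNReal.ofReal (1 + |σ - m|) * f σ ^ 2)) := by
        refine lintegral_lintegral_swap (Measurable.aemeasurable ?_)
        simp only [Function.uncurry_def]
        fun_prop
    _ ≤ ∫⁻ σ : ℝ, ENNReal.ofReal (B * J) * (ENNReal.ofReal (1 + |σ - m|) * f σ ^ 2) := by
        refine lintegral_mono fun σ => ?_
        rw [lintegral_const_mul _ (by fun_prop), lintegral_mul_const _ (by fun_prop),
          ENNReal.ofReal_mul hB_pos.le, mul_assoc]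
        gcongr
        exact h _ _ (by linarith) (by linarith) (by linarith) _ _
    _ = _ := lintegral_const_mul _ (by fun_prop)

/-- Time localization gain in Bourgain spaces: for `b < 1/2` and `ε > 0`, convolving in `τ`
with `K_δ(τ) = 2 sin(δτ)/τ` (the Fourier transform of `χ_{[-δ,δ]}`), i.e. sharply
truncating in time to `[-δ, δ]`, gains `δ^{1/2 - b - ε}`:
`‖G‖_{X^{s,b}} ≤ C δ^{1/2-b-ε} ‖F‖_{X^{s,1/2}}` where `G(n,τ) = (1/2π)(K_δ * F(n,·))(τ)`. -/
theorem stmt_15 (s b ε : ℝ) (hb0 : 0 ≤ b) (hb : b < 1/2) (hε : 0 < ε) :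
    ∃ C : ℝ, 0 < C ∧
      ∀ δ : ℝ, 0 < δ → δ ≤ 1 →
        ∀ F : ℤ → ℝ → ℂ, Measurable (fun p : ℤ × ℝ => F p.1 p.2) →
          XNorm s (1/2) F ≠ ⊤ →
          ∀ G : ℤ → ℝ → ℂ,
            (∀ n τ, G n τ = (1 / (2 * Real.pi)) *
              ∫ σ' : ℝ, ((2 * Real.sin (δ * (τ - σ')) / (τ - σ') : ℝ) : ℂ) * F n σ') →
            XNorm s b G ≤ ENNReal.ofReal (C * δ ^ (1/2 - b - ε)) * XNorm s (1/2) F := by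
  obtain ⟨θ, hθ0, hθ, hθε⟩ : ∃ θ : ℝ, 0 < θ ∧ b + θ < 1 / 2 ∧ 1 / 2 - b - ε ≤ θ := by
    rcases le_total ε ((1 / 2 - b) / 2) with h | h
    · exact ⟨1 / 2 - b - ε, by linarith, by linarith, le_rfl⟩
    · exact ⟨(1 / 2 - b) / 2, by linarith, by linarith, by linarith⟩
  obtain ⟨D, hD, hS⟩ := exists_weighted_lintegral_sq_le hb0 hθ0 hθ
  refine ⟨4 * D ^ (1 / 2 : ℝ), by positivity, fun δ hδ hδ1 F hF _ G hG => ?_⟩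
  have hFn : ∀ n, Measurable (F n) := fun n => hF.comp measurable_prodMk_left
  have hGle : ∀ n τ, ‖G n τ‖ₑ ≤ ENNReal.ofReal (4 * δ ^ θ) *
      ∫⁻ σ : ℝ, ENNReal.ofReal ((1 + |τ - σ|) ^ (θ - 1)) * ‖F n σ‖ₑ := by
    intro n τ
    have hpi : ‖(1 / (2 * Real.pi) : ℂ)‖ₑ ≤ 1 := by
      rw [← ofReal_norm, ENNReal.ofReal_le_one]
      have : (1 / (2 * Real.pi) : ℂ) = ((1 / (2 * Real.pi) : ℝ) : ℂ) := by push_cast; rfl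
      rw [this, Complex.norm_real, Real.norm_of_nonneg (by positivity), div_le_one (by positivity)]
      linarith [Real.pi_gt_three]
    rw [hG, enorm_mul, ← lintegral_const_mul _ (by have := hFn n; fun_prop)]
    refine (mul_le_mul' hpi (enorm_integral_le_lintegral_enorm _)).trans ?_
    rw [one_mul]
    refine lintegral_mono fun σ => ?_
    rw [enorm_mul, ← mul_assoc, ← ENNReal.ofReal_mul (by positivity)]
    gcongr
    rw [← ofReal_norm, Complex.norm_real, Real.norm_eq_abs]
    exact ENNReal.ofReal_le_ofReal (abs_sinc_kernel_le hδ hδ1 hθ0.le (by linarith) _)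
  have hn : ∀ n : ℤ, ∫⁻ τ : ℝ, ENNReal.ofReal
        ((1 + |(n : ℝ)|) ^ (2 * s) * (1 + |τ - (n : ℝ) ^ 2|) ^ (2 * b) * ‖G n τ‖ ^ 2) ≤
      ENNReal.ofReal ((4 * δ ^ θ) ^ 2 * D) * ∫⁻ τ : ℝ, ENNReal.ofReal
        ((1 + |(n : ℝ)|) ^ (2 * s) * (1 + |τ - (n : ℝ) ^ 2|) ^ (2 * (1 / 2 : ℝ)) *
          ‖F n τ‖ ^ 2) := by
    intro n
    have hFm := hFn n
    calc _ ≤ ∫⁻ τ : ℝ, ENNReal.ofReal ((1 + |(n : ℝ)|) ^ (2 * s) * (4 * δ ^ θ) ^ 2) *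
          (ENNReal.ofReal ((1 + |τ - (n : ℝ) ^ 2|) ^ (2 * b)) *
            (∫⁻ σ : ℝ, ENNReal.ofReal ((1 + |τ - σ|) ^ (θ - 1)) * ‖F n σ‖ₑ) ^ 2) := by
          refine lintegral_mono fun τ => ?_
          rw [ENNReal.ofReal_mul (by positivity), ENNReal.ofReal_mul (by positivity),
            ENNReal.ofReal_mul (by positivity), ENNReal.ofReal_pow (by positivity),
            ENNReal.ofReal_pow (by positivity), ofReal_norm]
          refine (mul_le_mul_right (pow_le_pow_left₀ zero_le (hGle n τ) 2) _).trans
            (le_of_eq (by ring))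
      _ = ENNReal.ofReal ((1 + |(n : ℝ)|) ^ (2 * s) * (4 * δ ^ θ) ^ 2) *
          ∫⁻ τ : ℝ, (ENNReal.ofReal ((1 + |τ - (n : ℝ) ^ 2|) ^ (2 * b)) *
            (∫⁻ σ : ℝ, ENNReal.ofReal ((1 + |τ - σ|) ^ (θ - 1)) * ‖F n σ‖ₑ) ^ 2) :=
          lintegral_const_mul' _ _ ENNReal.ofReal_ne_top
      _ ≤ ENNReal.ofReal ((1 + |(n : ℝ)|) ^ (2 * s) * (4 * δ ^ θ) ^ 2) * (ENNReal.ofReal D *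
          ∫⁻ σ : ℝ, ENNReal.ofReal (1 + |σ - (n : ℝ) ^ 2|) * ‖F n σ‖ₑ ^ 2) := by
          gcongr
          exact hS _ _ (by fun_prop)
      _ = _ := by
          rw [← lintegral_const_mul' _ _ ENNReal.ofReal_ne_top,
            ← lintegral_const_mul' _ _ ENNReal.ofReal_ne_top,
            ← lintegral_const_mul' _ _ ENNReal.ofReal_ne_top]
          refine lintegral_congr fun τ => ?_
          rw [← ofReal_norm, ← ENNReal.ofReal_pow (by positivity),
            ← ENNReal.ofReal_mul (by positivity), ← ENNReal.ofReal_mul (by positivity),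
            ← ENNReal.ofReal_mul (by positivity), ← ENNReal.ofReal_mul (by positivity)]
          congr 1
          norm_num
          ring
  unfold XNorm
  calc _ ≤ (ENNReal.ofReal ((4 * δ ^ θ) ^ 2 * D) * ∑' n : ℤ, ∫⁻ τ : ℝ, ENNReal.ofReal
        ((1 + |(n : ℝ)|) ^ (2 * s) * (1 + |τ - (n : ℝ) ^ 2|) ^ (2 * (1 / 2 : ℝ)) *
          ‖F n τ‖ ^ 2)) ^ (1 / 2 : ℝ) := by
        rw [← ENNReal.tsum_mul_left]
        exact ENNReal.rpow_le_rpow (ENNReal.tsum_le_tsum hn) (by norm_num)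
    _ ≤ _ := by
        rw [ENNReal.mul_rpow_of_nonneg _ _ (by norm_num)]
        refine mul_le_mul_left ?_ _
        rw [ENNReal.ofReal_rpow_of_nonneg (by positivity) (by norm_num),
          Real.mul_rpow (by positivity) hD.le, ← Real.sqrt_eq_rpow, Real.sqrt_sq (by positivity)]
        refine ENNReal.ofReal_le_ofReal ?_
        have := Real.rpow_le_rpow_of_exponent_ge hδ hδ1 hθε
        rw [mul_right_comm, ← Real.sqrt_eq_rpow]
        gcongr
end

section
/- For every ε ∈ (0, 1/2) there exists a constant C > 0 such that for every δ ∈ (0, 1], every a ∈ ℝ, and every measurable f : ℝ → ℂ with ∫_ℝ (1 + |τ − a|) |f(τ)|² dτ < ∞, one has ‖ K_δ * f ‖_{L²(ℝ)} ≤ C δ^{1/2 − ε} ( ∫_ℝ (1 + |τ − a|) |f(τ)|² dτ )^{1/2}, where K_δ(τ) = 2 sin(δτ)/τ and * denotes convolution on ℝ. -/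
open MeasureTheory

open scoped ENNReal

/-- A weighted form of Young's convolution inequality: multiplication by an `L^r` function followed
by convolution with an `L^p` kernel, `p` and `r` conjugate, is bounded on `L²`. -/
theorem lintegral_sq_conv_mul_le {p r : ℝ} (hpr : p.HolderConjugate r) (hp2 : p < 2)
    {k u g : ℝ → ℝ≥0∞} (hk : Measurable k) (hu : Measurable u) (hg : Measurable g) :
    ∫⁻ τ, (∫⁻ σ, k (τ - σ) * (u σ * g σ)) ^ (2 : ℝ) ≤
      (∫⁻ x, k x ^ p) ^ (2 / p) * (∫⁻ x, u x ^ r) ^ (2 / r) * ∫⁻ x, g x ^ (2 : ℝ) := by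
  have hp0 : 0 < p := hpr.pos
  have hr0 : 0 < r := hpr.symm.pos
  have hsum : p⁻¹ + r⁻¹ = 1 := hpr.inv_add_inv_eq_one
  have pointwise (τ : ℝ) : (∫⁻ σ, k (τ - σ) * (u σ * g σ)) ^ (2 : ℝ) ≤
      (∫⁻ σ, k (τ - σ) ^ p * g σ ^ (2 : ℝ)) *
        ((∫⁻ x, k x ^ p) ^ ((2 - p) / p) * (∫⁻ x, u x ^ r) ^ (2 / r)) := by
    have cauchySchwarz := ENNReal.lintegral_mul_le_Lp_mul_Lq volume Real.HolderConjugate.two_two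
      (f := fun σ => k (τ - σ) ^ (p / 2) * g σ) (g := fun σ => k (τ - σ) ^ ((2 - p) / 2) * u σ)
      (by fun_prop) (by fun_prop)
    have hconj : (p / (2 - p)).HolderConjugate (r / 2) := by
      rw [Real.holderConjugate_iff]
      constructor
      · rw [lt_div_iff₀ (by linarith)]
        linarith [hpr.lt]
      · have : r⁻¹ = 1 - p⁻¹ := by linarith
        rw [inv_div, inv_div, div_eq_mul_inv 2 r, this]
        field_simp
        ring
    have hoelder := ENNReal.lintegral_mul_le_Lp_mul_Lq volume hconj
      (f := fun σ => k (τ - σ) ^ (2 - p)) (g := fun σ => u σ ^ (2 : ℝ))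
      (by fun_prop) (by fun_prop)
    simp only [Pi.mul_apply, ← ENNReal.rpow_mul, one_div, inv_div] at hoelder
    rw [mul_div_cancel₀ _ (by linarith : 2 - p ≠ 0), mul_div_cancel₀ _ (two_ne_zero' ℝ),
      lintegral_sub_left_eq_self (fun x => k x ^ p) τ] at hoelder
    have factor : ∀ σ, k (τ - σ) * (u σ * g σ) =
        k (τ - σ) ^ (p / 2) * g σ * (k (τ - σ) ^ ((2 - p) / 2) * u σ) := fun σ => by
      have : k (τ - σ) = k (τ - σ) ^ (p / 2) * k (τ - σ) ^ ((2 - p) / 2) := by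
        rw [← ENNReal.rpow_add_of_nonneg _ _ (by positivity) (by linarith),
          show p / 2 + (2 - p) / 2 = 1 by ring, ENNReal.rpow_one]
      conv_lhs => rw [this]
      ring
    simp only [Pi.mul_apply, ← factor, ENNReal.mul_rpow_of_nonneg _ _ (zero_le_two (α := ℝ)),
      ← ENNReal.rpow_mul, div_mul_cancel₀ _ (two_ne_zero' ℝ)] at cauchySchwarz
    calc _ ≤ _ := ENNReal.rpow_le_rpow cauchySchwarz zero_le_two
      _ = (∫⁻ σ, k (τ - σ) ^ p * g σ ^ (2 : ℝ)) *
          ∫⁻ σ, k (τ - σ) ^ (2 - p) * u σ ^ (2 : ℝ) := by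
        rw [ENNReal.mul_rpow_of_nonneg _ _ zero_le_two, ← ENNReal.rpow_mul, ← ENNReal.rpow_mul]
        norm_num
      _ ≤ _ := by gcongr
  calc _ ≤ _ := lintegral_mono pointwise
    _ = (∫⁻ τ, ∫⁻ σ, k (τ - σ) ^ p * g σ ^ (2 : ℝ)) *
        ((∫⁻ x, k x ^ p) ^ ((2 - p) / p) * (∫⁻ x, u x ^ r) ^ (2 / r)) :=
      lintegral_mul_const _ (Measurable.lintegral_prod_right'
        (f := fun z : ℝ × ℝ => k (z.1 - z.2) ^ p * g z.2 ^ (2 : ℝ)) (by fun_prop))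
    _ = ((∫⁻ x, k x ^ p) * ∫⁻ x, g x ^ (2 : ℝ)) *
        ((∫⁻ x, k x ^ p) ^ ((2 - p) / p) * (∫⁻ x, u x ^ r) ^ (2 / r)) := by
      rw [lintegral_lintegral_swap (by fun_prop), ← lintegral_const_mul _ (by fun_prop)]
      congr 2 with σ
      rw [lintegral_mul_const _ (by fun_prop), lintegral_sub_right_eq_self (fun x => k x ^ p) σ]
    _ = _ := by
      have : (∫⁻ x, k x ^ p) ^ (2 / p) =
          (∫⁻ x, k x ^ p) * (∫⁻ x, k x ^ p) ^ ((2 - p) / p) := by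
        have h := ENNReal.rpow_add_of_nonneg (x := ∫⁻ x, k x ^ p) 1 ((2 - p) / p) zero_le_one
          (div_nonneg (by linarith) hp0.le)
        rwa [ENNReal.rpow_one, show 1 + (2 - p) / p = 2 / p by field_simp; ring] at h
      rw [this]
      ring

theorem abs_two_mul_sin_mul_div_le {δ : ℝ} (hδ : 0 < δ) (x : ℝ) :
    |2 * Real.sin (δ * x) / x| ≤ 4 * δ * (1 + |δ * x|)⁻¹ := by
  rcases eq_or_ne x 0 with rfl | hx
  · simpa using hδ.le
  have hx' : 0 < |x| := abs_pos.2 hx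
  have hsin : |Real.sin (δ * x)| ≤ |δ * x| := Real.abs_sin_le_abs
  have hone := Real.abs_sin_le_one (δ * x)
  rw [abs_div, abs_mul, abs_two, ← div_eq_mul_inv, div_le_div_iff₀ hx' (by positivity)]
  rw [abs_mul, abs_of_pos hδ] at *
  nlinarith [mul_le_mul_of_nonneg_right hone (by positivity : 0 ≤ δ * |x|)]

theorem lintegral_comp_const_mul {δ : ℝ} (hδ : 0 < δ) {F : ℝ → ℝ≥0∞} (hF : Measurable F) :
    ∫⁻ x, F (δ * x) = ENNReal.ofReal δ⁻¹ * ∫⁻ x, F x := by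
  rw [← lintegral_map hF (measurable_const_mul δ), Real.map_volume_mul_left hδ.ne',
    lintegral_smul_measure, abs_of_pos (inv_pos.2 hδ), smul_eq_mul]

theorem lintegral_ofReal_mul_inv_rpow {δ p : ℝ} (hδ : 0 < δ) (hp : 0 < p) :
    (∫⁻ x, ENNReal.ofReal (4 * δ * (1 + |δ * x|)⁻¹) ^ p) ^ p⁻¹ =
      ENNReal.ofReal (4 * δ ^ (1 - p⁻¹)) *
        (∫⁻ x : ℝ, ENNReal.ofReal ((1 + ‖x‖) ^ (-p))) ^ p⁻¹ := by
  have hpt (x : ℝ) : ENNReal.ofReal (4 * δ * (1 + |δ * x|)⁻¹) ^ p =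
      ENNReal.ofReal (4 * δ) ^ p * ENNReal.ofReal ((1 + ‖δ * x‖) ^ (-p)) := by
    rw [ENNReal.ofReal_mul (by positivity), ENNReal.mul_rpow_of_nonneg _ _ hp.le,
      ENNReal.ofReal_rpow_of_nonneg (x := (1 + |δ * x|)⁻¹) (by positivity) hp.le,
      Real.inv_rpow (by positivity), Real.rpow_neg (by positivity), Real.norm_eq_abs]
  simp_rw [hpt]
  rw [lintegral_const_mul _ (by fun_prop),
    lintegral_comp_const_mul hδ (F := fun x => ENNReal.ofReal ((1 + ‖x‖) ^ (-p))) (by fun_prop),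
    ENNReal.mul_rpow_of_nonneg _ _ (by positivity), ENNReal.mul_rpow_of_nonneg _ _ (by positivity),
    ENNReal.rpow_rpow_inv hp.ne', ← mul_assoc,
    ENNReal.ofReal_rpow_of_nonneg (by positivity) (by positivity),
    ← ENNReal.ofReal_mul (by positivity), Real.inv_rpow hδ.le, Real.rpow_sub hδ, Real.rpow_one,
    mul_assoc, div_eq_mul_inv]

/-- Fiberwise time-localization estimate: for `0 < ε < 1/2` there is `C > 0` such that for
all `0 < δ ≤ 1`, all `a ∈ ℝ` and all `f` with `∫ (1+|τ-a|)|f(τ)|² dτ < ∞`,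
`‖K_δ * f‖_{L²(ℝ)} ≤ C δ^{1/2-ε} ( ∫ (1+|τ-a|)|f(τ)|² dτ )^{1/2}`,
where `K_δ(τ) = 2 sin(δτ)/τ` is the Fourier transform of `χ_{[-δ,δ]}`. -/
theorem stmt_16 (ε : ℝ) (hε0 : 0 < ε) (hε : ε < 1/2) :
    ∃ C : ℝ, 0 < C ∧
      ∀ δ : ℝ, 0 < δ → δ ≤ 1 →
        ∀ a : ℝ, ∀ f : ℝ → ℂ, Measurable f →
          (∫⁻ τ : ℝ, ENNReal.ofReal ((1 + |τ - a|) * ‖f τ‖ ^ 2)) ≠ ⊤ →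
          eLpNorm
              (fun τ : ℝ => ∫ σ' : ℝ,
                ((2 * Real.sin (δ * (τ - σ')) / (τ - σ') : ℝ) : ℂ) * f σ')
              2 volume
            ≤ ENNReal.ofReal (C * δ ^ (1/2 - ε)) *
              (∫⁻ τ : ℝ, ENNReal.ofReal ((1 + |τ - a|) * ‖f τ‖ ^ 2)) ^ ((1 : ℝ) / 2) := by
  set p : ℝ := (1 / 2 + ε)⁻¹ with hp
  set r : ℝ := (1 / 2 - ε)⁻¹ with hr
  have hp1 : 1 < p := (one_lt_inv₀ (by linarith)).2 (by linarith)
  have hp2 : p < 2 := (inv_lt_comm₀ (by linarith) two_pos).2 (by linarith)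
  have hr2 : 1 < r / 2 := by
    have : 2 < r := (lt_inv_comm₀ two_pos (by linarith)).2 (by linarith)
    linarith
  have hpr : p.HolderConjugate r := by
    rw [Real.holderConjugate_iff]
    exact ⟨hp1, by rw [hp, hr, inv_inv, inv_inv]; ring⟩
  have hexp : 1 - p⁻¹ = 1 / 2 - ε := by rw [hp, inv_inv]; ring
  set A : ℝ≥0∞ := (∫⁻ x : ℝ, ENNReal.ofReal ((1 + ‖x‖) ^ (-p))) ^ p⁻¹ with hA
  set B : ℝ≥0∞ := (∫⁻ x : ℝ, ENNReal.ofReal ((1 + ‖x‖) ^ (-(r / 2)))) ^ r⁻¹ with hB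
  have hA_top : A ≠ ⊤ := ENNReal.rpow_ne_top_of_nonneg (inv_nonneg.2 hpr.nonneg)
    (finite_integral_one_add_norm (by simpa using hp1)).ne
  have hB_top : B ≠ ⊤ := ENNReal.rpow_ne_top_of_nonneg (inv_nonneg.2 hpr.symm.nonneg)
    (finite_integral_one_add_norm (by simpa using hr2)).ne
  refine ⟨4 * (A * B).toReal + 1, by positivity, fun δ hδ _ a f hf _ => ?_⟩
  set k : ℝ → ℝ≥0∞ := fun x => ENNReal.ofReal (4 * δ * (1 + |δ * x|)⁻¹) with hk
  set u : ℝ → ℝ≥0∞ := fun x => ENNReal.ofReal ((1 + |x - a|) ^ (-(1 / 2) : ℝ)) with hu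
  set g : ℝ → ℝ≥0∞ := fun x => ENNReal.ofReal ((1 + |x - a|) ^ (1 / 2 : ℝ) * ‖f x‖) with hg
  have hug (x : ℝ) : u x * g x = ‖f x‖ₑ := by
    have hw : 0 < 1 + |x - a| := by positivity
    rw [hu, hg, ← ENNReal.ofReal_mul (by positivity), ← mul_assoc, ← Real.rpow_add hw]
    simp
  have hg2 (x : ℝ) : g x ^ (2 : ℝ) = ENNReal.ofReal ((1 + |x - a|) * ‖f x‖ ^ 2) := by
    have hw : 0 ≤ 1 + |x - a| := by positivity
    rw [hg, ENNReal.ofReal_rpow_of_nonneg (by positivity) zero_le_two,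
      Real.mul_rpow (by positivity) (norm_nonneg _), ← Real.rpow_mul hw, Real.rpow_two]
    norm_num
  have hur : (∫⁻ x, u x ^ r) ^ r⁻¹ = B := by
    rw [hB,
      ← lintegral_sub_right_eq_self (fun x : ℝ => ENNReal.ofReal ((1 + ‖x‖) ^ (-(r / 2)))) a]
    congr 2 with x
    rw [hu, ENNReal.ofReal_rpow_of_nonneg (by positivity) hpr.symm.nonneg,
      ← Real.rpow_mul (by positivity), Real.norm_eq_abs]
    ring_nf
  have hkp : (∫⁻ x, k x ^ p) ^ p⁻¹ = ENNReal.ofReal (4 * δ ^ (1 / 2 - ε)) * A := by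
    rw [hk, lintegral_ofReal_mul_inv_rpow hδ hpr.pos, hexp]
  have hconv (τ : ℝ) : ‖∫ σ' : ℝ, ((2 * Real.sin (δ * (τ - σ')) / (τ - σ') : ℝ) : ℂ) * f σ'‖ₑ ≤
      ∫⁻ σ, k (τ - σ) * (u σ * g σ) := by
    refine (enorm_integral_le_lintegral_enorm _).trans (lintegral_mono fun σ => ?_)
    rw [enorm_mul, hug]
    gcongr
    rw [← ofReal_norm, Complex.norm_real]
    exact ENNReal.ofReal_le_ofReal (abs_two_mul_sin_mul_div_le hδ (τ - σ))
  rw [eLpNorm_eq_lintegral_rpow_enorm_toReal two_ne_zero ENNReal.ofNat_ne_top,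
    ENNReal.toReal_ofNat]
  calc _ ≤ ((∫⁻ x, k x ^ p) ^ (2 / p) * (∫⁻ x, u x ^ r) ^ (2 / r) *
        ∫⁻ x, g x ^ (2 : ℝ)) ^ (1 / 2 : ℝ) := by
        refine ENNReal.rpow_le_rpow (le_trans (lintegral_mono fun τ => ?_)
          (lintegral_sq_conv_mul_le hpr hp2 (by fun_prop) (by fun_prop) (by fun_prop)))
          (by norm_num)
        exact ENNReal.rpow_le_rpow (hconv τ) zero_le_two
    _ = ENNReal.ofReal (4 * δ ^ (1 / 2 - ε)) * A * B *
        (∫⁻ x, ENNReal.ofReal ((1 + |x - a|) * ‖f x‖ ^ 2)) ^ (1 / 2 : ℝ) := by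
        rw [ENNReal.mul_rpow_of_nonneg _ _ (by norm_num),
          ENNReal.mul_rpow_of_nonneg _ _ (by norm_num), ← ENNReal.rpow_mul, ← ENNReal.rpow_mul,
          show 2 / p * (1 / 2) = p⁻¹ by ring, show 2 / r * (1 / 2) = r⁻¹ by ring, hkp, hur]
        simp_rw [hg2]
    _ ≤ _ := by
        gcongr
        have hAB := ENNReal.ofReal_toReal (ENNReal.mul_ne_top hA_top hB_top)
        nth_rewrite 1 [mul_assoc, ← hAB]
        rw [← ENNReal.ofReal_mul (by positivity)]
        apply ENNReal.ofReal_le_ofReal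
        rw [add_mul, mul_right_comm]
        linarith [Real.rpow_pos_of_pos hδ (1 / 2 - ε)]
end
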